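/- arXiv:2012.04901 — 2 statements merged into one kernel-verified Lean document; each statement's English description precedes it below -/
import Mathlib

section
/- Fix an i.i.d. source X^n with per-letter distribution P_X on finite 𝒳, and an i.i.d. query distribution Q_{X̂}^n = Q_{X̂}^{⊗n} on 𝒳̂^n, with distortion d_n(x,x̂) = (1/n)Σ_i d(x_i, x̂_i) and level Δ. Then for every sequence x ∈ 𝒳^n, (−1/n) log Q_{X̂}^n({x̂ : d_n(x,x̂) ≤ Δ}) = R(P_x, Q_{X̂}|Δ) + o(1) uniformly over x ∈ 𝒳^n as n → ∞, where P_x denotes the empirical type of x. -/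
open scoped BigOperators

/-- Real-valued Kullback–Leibler divergence of finite probability vectors
(convention `0 log(0/q) = 0`; intended for use with positive `Q`). -/
noncomputable def klDivR {ι : Type*} [Fintype ι] (P Q : ι → ℝ) : ℝ :=
  ∑ x, if P x = 0 then 0 else P x * Real.log (P x / Q x)

/-- Mutual information `I(P, V)` (real-valued). -/
noncomputable def mutualInfoR {ι κ : Type*} [Fintype ι] [Fintype κ]
    (P : ι → ℝ) (V : ι → κ → ℝ) : ℝ :=
  klDivR (fun z : ι × κ => P z.1 * V z.1 z.2)
    (fun z : ι × κ => P z.1 * ∑ x, P x * V x z.2)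

/-- `V` is a channel (conditional distribution). -/
def IsChannel {ι κ : Type*} [Fintype κ] (V : ι → κ → ℝ) : Prop :=
  (∀ x y, 0 ≤ V x y) ∧ ∀ x, ∑ y, V x y = 1

/-- `R(Q_X, Q_{X̂} | Δ) = min_V [I(Q_X,V) + D(Q_X V ‖ Q_{X̂})]` over channels
with expected distortion at most `Δ`. -/
noncomputable def Rfun {ι κ : Type*} [Fintype ι] [Fintype κ]
    (QX : ι → ℝ) (QY : κ → ℝ) (d : ι → κ → ℝ) (Δ : ℝ) : ℝ :=
  sInf {r : ℝ | ∃ V : ι → κ → ℝ, IsChannel V ∧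
    (∑ x, ∑ y, QX x * V x y * d x y) ≤ Δ ∧
    r = mutualInfoR QX V + klDivR (fun y => ∑ x, QX x * V x y) QY}

/-- Empirical type of a sequence `x ∈ 𝒳^n`. -/
noncomputable def empType {𝒳 : Type*} [Fintype 𝒳] [DecidableEq 𝒳] {n : ℕ}
    (x : Fin n → 𝒳) : 𝒳 → ℝ :=
  fun a => ((Finset.univ.filter fun i => x i = a).card : ℝ) / n

/-- Probability under `Q^{⊗n}` of the distortion ball
`A_Δ(x) = {x̂ ∈ 𝒳̂^n : (1/n) Σ_i d(x_i, x̂_i) ≤ Δ}`. -/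
noncomputable def ballProbN {𝒳 𝒳' : Type*} [Fintype 𝒳'] (Q : 𝒳' → ℝ)
    (d : 𝒳 → 𝒳' → ℝ) (Δ : ℝ) {n : ℕ} (x : Fin n → 𝒳) : ℝ :=
  ∑ y : Fin n → 𝒳', if (∑ i, d (x i) (y i)) ≤ n * Δ then ∏ i, Q (y i) else 0

namespace BPE

open Finset

lemma prod_fact_step {ι : Type*} [Fintype ι] [DecidableEq ι] (N N' : ι → ℕ) (p : ι)
    (hp : N p = N' p + 1) (h : ∀ q, q ≠ p → N q = N' q) :
    ∏ q, (N q).factorial = N p * ∏ q, (N' q).factorial := by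
  rw [← Finset.mul_prod_erase univ _ (mem_univ p),
    ← Finset.mul_prod_erase univ (fun q => (N' q).factorial) (mem_univ p), hp,
    Nat.factorial_succ, mul_assoc]
  congr 2
  apply Finset.prod_congr rfl
  intro q hq
  rw [h q (Finset.ne_of_mem_erase hq)]

/-- counts -/
def cnt {X : Type*} [DecidableEq X] {n : ℕ} (x : Fin n → X) (a : X) : ℕ :=
  ∑ i, if x i = a then 1 else 0

lemma cnt_cons {X : Type*} [DecidableEq X] {n : ℕ} (x : Fin n → X) (a b : X) :
    cnt (Fin.cons a x : Fin (n+1) → X) b = (if a = b then 1 else 0) + cnt x b := by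
  simp only [cnt, Fin.sum_univ_succ, Fin.cons_zero, Fin.cons_succ]

/-- joint counts -/
def jc {X Y : Type*} [DecidableEq X] [DecidableEq Y] {n : ℕ} (x : Fin n → X) (y : Fin n → Y) :
    X × Y → ℕ := cnt (fun i => (x i, y i))

lemma jc_cons {X Y : Type*} [DecidableEq X] [DecidableEq Y] {n : ℕ} (x : Fin n → X)
    (y : Fin n → Y) (a : X) (b : Y) (p : X × Y) :
    jc (Fin.cons a x : Fin (n+1) → X) (Fin.cons b y : Fin (n+1) → Y) p
      = (if (a, b) = p then 1 else 0) + jc x y p := by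
  simp only [jc, cnt, Fin.sum_univ_succ, Fin.cons_zero, Fin.cons_succ]

lemma class_card {X Y : Type*} [Fintype X] [Fintype Y] [DecidableEq X] [DecidableEq Y] :
    ∀ (n : ℕ) (x : Fin n → X) (N : X × Y → ℕ), (∀ a, ∑ b, N (a, b) = cnt x a) →
    (∏ p, (N p).factorial) * (∑ y : Fin n → Y, if jc x y = N then 1 else 0)
      = ∏ a, (cnt x a).factorial := by
  intro n
  induction n with
  | zero =>
    intro x N hN
    have h0 : N = fun _ => 0 := by
      funext ⟨a, b⟩
      have := hN a
      simp only [cnt, univ_eq_empty, sum_empty, Finset.sum_eq_zero_iff] at this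
      exact this b (mem_univ b)
    subst h0
    have : ∀ y : Fin 0 → Y, jc x y = fun _ => 0 := by
      intro y; funext p; simp [jc, cnt]
    simp [this, cnt]
  | succ n ih =>
    intro x N hN
    obtain ⟨a0, x, rfl⟩ : ∃ a0 x', x = Fin.cons a0 x' := ⟨x 0, Fin.tail x, by simp⟩
    have hsum : (∑ y : Fin (n+1) → Y, if jc (Fin.cons a0 x : Fin (n+1) → X) y = N then 1 else 0)
        = ∑ b : Y, ∑ y : Fin n → Y,
          if jc (Fin.cons a0 x : Fin (n+1) → X) (Fin.cons b y : Fin (n+1) → Y) = N then 1 else 0 := by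
      rw [← Fintype.sum_prod_type']
      exact (Fintype.sum_equiv (Fin.consEquiv (fun _ => Y)) _ _ (fun p => rfl)).symm
    rw [hsum, Finset.mul_sum]
    have key : ∀ b : Y, (∏ p, (N p).factorial) * (∑ y : Fin n → Y,
          if jc (Fin.cons a0 x : Fin (n+1) → X) (Fin.cons b y : Fin (n+1) → Y) = N then 1 else 0)
        = N (a0, b) * ∏ a, (cnt x a).factorial := by
      intro b
      rcases Nat.eq_zero_or_pos (N (a0, b)) with h | h
      · have : ∀ y : Fin n → Y, ¬ jc (Fin.cons a0 x : Fin (n+1) → X)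
            (Fin.cons b y : Fin (n+1) → Y) = N := by
          intro y hy
          have := congrFun hy (a0, b)
          rw [jc_cons, h] at this
          simp at this
        simp [this, h]
      · set N' : X × Y → ℕ := fun p => N p - if (a0, b) = p then 1 else 0 with hN'
        have hNN : ∀ p, N p = (if (a0, b) = p then 1 else 0) + N' p := by
          intro p
          simp only [hN']
          split_ifs with hp
          · subst hp; omega
          · omega
        have hiff : ∀ y : Fin n → Y, jc (Fin.cons a0 x : Fin (n+1) → X)
            (Fin.cons b y : Fin (n+1) → Y) = N ↔ jc x y = N' := by
          intro y
          constructor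
          · intro hy
            funext p
            have := congrFun hy p
            rw [jc_cons, hNN p] at this
            omega
          · intro hy
            funext p
            rw [jc_cons, hNN p, hy]
        simp only [hiff]
        rw [prod_fact_step N N' (a0, b) (by rw [hNN]; simp; omega)
          (by intro q hq; rw [hNN, if_neg (Ne.symm hq)]; omega), mul_assoc, ih x N']
        intro a
        have h1 := hN a
        rw [cnt_cons] at h1
        simp only [hNN (a, _)] at h1
        rw [Finset.sum_add_distrib] at h1
        have h2 : (∑ b' : Y, if (a0, b) = (a, b') then 1 else 0) = if a0 = a then 1 else 0 := by
          by_cases e : a0 = a <;> simp [e]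
        omega
    simp only [key]
    rw [← Finset.sum_mul, hN a0]
    refine (prod_fact_step _ (cnt x) a0 ?_ ?_).symm
    · rw [cnt_cons]; simp; omega
    · intro q hq
      rw [cnt_cons, if_neg (Ne.symm hq)]; omega

lemma sum_cnt {X : Type*} [Fintype X] [DecidableEq X] {n : ℕ} (x : Fin n → X) (f : X → ℝ) :
    ∑ i, f (x i) = ∑ a, (cnt x a : ℝ) * f a := by
  simp only [cnt, Nat.cast_sum, Finset.sum_mul]
  rw [Finset.sum_comm]
  simp

lemma prod_cnt {X : Type*} [Fintype X] [DecidableEq X] {n : ℕ} (x : Fin n → X) (f : X → ℝ)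
    (hf : ∀ a, 0 < f a) :
    ∏ i, f (x i) = Real.exp (∑ a, (cnt x a : ℝ) * Real.log (f a)) := by
  rw [← sum_cnt x (fun a => Real.log (f a)), Real.exp_sum]
  exact Finset.prod_congr rfl (fun i _ => (Real.exp_log (hf _)).symm)

lemma cnt_le {X : Type*} [DecidableEq X] {n : ℕ} (x : Fin n → X) (a : X) : cnt x a ≤ n := by
  calc cnt x a ≤ ∑ i : Fin n, 1 := Finset.sum_le_sum (fun i _ => by split_ifs <;> simp)
    _ = n := by simp

lemma jc_row {X Y : Type*} [Fintype Y] [DecidableEq X] [DecidableEq Y] {n : ℕ} (x : Fin n → X)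
    (y : Fin n → Y) (a : X) : ∑ b, jc x y (a, b) = cnt x a := by
  simp only [jc, cnt]
  rw [Finset.sum_comm]
  refine Finset.sum_congr rfl (fun i _ => ?_)
  by_cases e : x i = a <;> simp [e]

lemma log_succ_bounds (k : ℕ) (hk : 1 ≤ k) :
    (k : ℝ) * (Real.log (k+1) - Real.log k) ≤ 1 ∧ 1 ≤ ((k : ℝ)+1) * (Real.log (k+1) - Real.log k) := by
  have h0 : (0:ℝ) < k := by exact_mod_cast hk
  have h1 : (0:ℝ) < k + 1 := by positivity
  rw [← Real.log_div h1.ne' h0.ne']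
  constructor
  · have := Real.log_le_sub_one_of_pos (div_pos h1 h0)
    calc (k:ℝ) * Real.log ((k+1)/k) ≤ k * ((k+1)/k - 1) := by gcongr
      _ = 1 := by field_simp; ring
  · have := Real.one_sub_inv_le_log_of_pos (div_pos h1 h0)
    calc (1:ℝ) = ((k:ℝ)+1) * (1 - (((k:ℝ)+1)/k)⁻¹) := by field_simp; ring
      _ ≤ _ := by gcongr

lemma log_fact_lower (k : ℕ) : (k:ℝ) * Real.log k - k ≤ Real.log (k.factorial) := by
  induction k with
  | zero => simp
  | succ k ih =>
    rw [Nat.factorial_succ, Nat.cast_mul, Real.log_mul (by positivity) (by positivity)]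
    rcases Nat.eq_zero_or_pos k with rfl | hk
    · simp
    · have := (log_succ_bounds k hk).1
      push_cast at *
      nlinarith

lemma log_fact_upper' (k : ℕ) (hk : 1 ≤ k) :
    Real.log (k.factorial) ≤ ((k:ℝ)+1) * Real.log k - k + 1 := by
  induction k, hk using Nat.le_induction with
  | base => simp
  | succ k hk ih =>
    rw [Nat.factorial_succ, Nat.cast_mul, Real.log_mul (by positivity) (by positivity)]
    have := (log_succ_bounds k hk).2
    push_cast at *
    nlinarith

lemma log_fact_upper (k n : ℕ) (h : k ≤ n) :
    Real.log (k.factorial) ≤ (k:ℝ) * Real.log k - k + (1 + Real.log (n+1)) := by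
  rcases Nat.eq_zero_or_pos k with rfl | hk
  · simp
    have : 0 ≤ Real.log ((n:ℝ)+1) := Real.log_nonneg (by linarith [Nat.cast_nonneg (α := ℝ) n])
    linarith
  · have := log_fact_upper' k hk
    have h2 : Real.log k ≤ Real.log ((n:ℝ)+1) := by
      apply Real.log_le_log (by exact_mod_cast hk)
      have : (k:ℝ) ≤ n := by exact_mod_cast h
      linarith
    nlinarith

/-- the exponent functional -/
noncomputable def G {X Y : Type*} [Fintype X] [Fintype Y] (Q : Y → ℝ) (c : X → ℝ)
    (M : X × Y → ℝ) : ℝ :=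
  ∑ p, M p * Real.log (M p) - ∑ a, c a * Real.log (c a) - ∑ p, M p * Real.log (Q p.2)

/-- error term -/
noncomputable def E (X Y : Type*) [Fintype X] [Fintype Y] (n : ℕ) : ℝ :=
  ((Fintype.card X : ℝ) + Fintype.card (X × Y)) * (1 + Real.log (n+1))

lemma log_class {X Y : Type*} [Fintype X] [Fintype Y] [DecidableEq X] [DecidableEq Y]
    {n : ℕ} (x : Fin n → X) (N : X × Y → ℕ) (hN : ∀ a, ∑ b, N (a, b) = cnt x a) :
    ∃ t : ℝ, (∑ y : Fin n → Y, if jc x y = N then (1:ℝ) else 0) = Real.exp t ∧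
      |t - (∑ a, (cnt x a : ℝ) * Real.log (cnt x a) - ∑ p, (N p : ℝ) * Real.log (N p))| ≤ E X Y n := by
  set T : ℕ := ∑ y : Fin n → Y, if jc x y = N then 1 else 0 with hT
  have hTr : (∑ y : Fin n → Y, if jc x y = N then (1:ℝ) else 0) = T := by
    rw [hT]; push_cast; rfl
  have hc := class_card n x N hN
  rw [← hT] at hc
  have hTpos : 0 < T := by
    rcases Nat.eq_zero_or_pos T with h | h
    · rw [h, mul_zero] at hc
      exact absurd hc.symm (Finset.prod_pos (fun a _ => Nat.factorial_pos _)).ne'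
    · exact h
  have hTp : (0:ℝ) < T := by exact_mod_cast hTpos
  refine ⟨Real.log T, by rw [hTr, Real.exp_log hTp], ?_⟩
  have hlog : ∑ p, Real.log ((N p).factorial) + Real.log T
      = ∑ a, Real.log ((cnt x a).factorial) := by
    have h2 : ((∏ p, ((N p).factorial : ℝ)) * T) = ∏ a, ((cnt x a).factorial : ℝ) := by
      exact_mod_cast hc
    have h3 := congrArg Real.log h2
    rw [Real.log_mul (Finset.prod_ne_zero_iff.2 fun p _ => by positivity) hTp.ne',
      Real.log_prod (fun p _ => by positivity), Real.log_prod (fun p _ => by positivity)] at h3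
    exact h3
  have hNle : ∀ p, N p ≤ n := fun p =>
    (Finset.single_le_sum (f := fun b => N (p.1, b)) (fun _ _ => Nat.zero_le _) (mem_univ p.2)).trans
      ((hN p.1).le.trans (cnt_le x p.1))
  have hs : ∑ p, (N p : ℝ) = ∑ a, (cnt x a : ℝ) := by
    rw [Fintype.sum_prod_type]
    refine Finset.sum_congr rfl (fun a _ => ?_)
    rw [← hN a]; push_cast; rfl
  have u1 : ∑ p, Real.log ((N p).factorial) ≤ ∑ p, ((N p : ℝ) * Real.log (N p) - N p + (1 + Real.log (n+1))) :=
    Finset.sum_le_sum (fun p _ => log_fact_upper _ _ (hNle p))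
  have u2 : ∑ a, Real.log ((cnt x a).factorial) ≤
      ∑ a, ((cnt x a : ℝ) * Real.log (cnt x a) - cnt x a + (1 + Real.log (n+1))) :=
    Finset.sum_le_sum (fun p _ => log_fact_upper _ _ (cnt_le x p))
  have l1 : ∑ p, ((N p : ℝ) * Real.log (N p) - N p) ≤ ∑ p, Real.log ((N p).factorial) :=
    Finset.sum_le_sum (fun p _ => log_fact_lower _)
  have l2 : ∑ a, ((cnt x a : ℝ) * Real.log (cnt x a) - cnt x a) ≤ ∑ a, Real.log ((cnt x a).factorial) :=
    Finset.sum_le_sum (fun p _ => log_fact_lower _)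
  simp only [Finset.sum_add_distrib, Finset.sum_sub_distrib, Finset.sum_const, card_univ, nsmul_eq_mul] at u1 u2 l1 l2
  have hl : 0 ≤ Real.log ((n:ℝ)+1) := Real.log_nonneg (by linarith [Nat.cast_nonneg (α := ℝ) n])
  have p1 : 0 ≤ (Fintype.card X : ℝ) * (1 + Real.log (n+1)) := by positivity
  have p2 : 0 ≤ (Fintype.card (X × Y) : ℝ) * (1 + Real.log (n+1)) := by positivity
  rw [abs_le, E, add_mul]
  constructor <;> linarith

lemma class_mass {X Y : Type*} [Fintype X] [Fintype Y] [DecidableEq X] [DecidableEq Y]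
    (Q : Y → ℝ) (hQ : ∀ y, 0 < Q y)
    {n : ℕ} (x : Fin n → X) (N : X × Y → ℕ) (hN : ∀ a, ∑ b, N (a, b) = cnt x a) :
    ∃ t : ℝ, (∑ y : Fin n → Y, if jc x y = N then ∏ i, Q (y i) else 0) = Real.exp t ∧
      |t + G Q (fun a => (cnt x a : ℝ)) (fun p => (N p : ℝ))| ≤ E X Y n := by
  obtain ⟨t, ht, hb⟩ := log_class x N hN
  refine ⟨t + ∑ p, (N p : ℝ) * Real.log (Q p.2), ?_, ?_⟩
  · rw [Real.exp_add, ← ht, Finset.sum_mul]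
    refine Finset.sum_congr rfl (fun y _ => ?_)
    split_ifs with h
    · rw [one_mul, ← h]
      exact prod_cnt (fun i => (x i, y i)) (fun p => Q p.2) (fun p => hQ _)
    · simp
  · convert hb using 2
    simp only [G]; ring


lemma phi_diff {s t n : ℝ} (hs : 0 ≤ s) (hst : s ≤ t) (htn : t ≤ n) (hn : 1 ≤ n) :
    t * Real.log t - s * Real.log s ≤ (t - s) * (1 + Real.log n) ∧
    s * Real.log s - t * Real.log t ≤ 1 := by
  have hln : 0 ≤ Real.log n := Real.log_nonneg hn
  rcases hs.eq_or_lt with rfl | hs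
  · rcases hst.eq_or_lt with rfl | ht
    · simp
    · constructor
      · have := Real.log_le_log ht htn
        simp only [zero_mul, sub_zero]
        nlinarith
      · have := Real.one_sub_inv_le_log_of_pos ht
        have h2 : t * (1 - t⁻¹) ≤ t * Real.log t := by gcongr
        have h3 : t * (1 - t⁻¹) = t - 1 := by field_simp
        simp only [zero_mul]
        linarith
  · have ht : 0 < t := lt_of_lt_of_le hs hst
    constructor
    · have h1 := Real.log_le_log ht htn
      have h2 := Real.log_le_sub_one_of_pos (div_pos ht hs)
      rw [Real.log_div ht.ne' hs.ne'] at h2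
      have h3 : s * (Real.log t - Real.log s) ≤ s * (t/s - 1) := by gcongr
      have h4 : s * (t/s - 1) = t - s := by field_simp
      have h5 : (t - s) * Real.log t ≤ (t - s) * Real.log n :=
        mul_le_mul_of_nonneg_left h1 (by linarith)
      nlinarith
    · have h1 := Real.log_le_log hs hst
      have := Real.one_sub_inv_le_log_of_pos ht
      rcases le_or_gt 0 (Real.log t) with h | h
      · nlinarith
      · have h2 : t * (1 - t⁻¹) ≤ t * Real.log t := by gcongr
        have h3 : t * (1 - t⁻¹) = t - 1 := by field_simp
        nlinarith

lemma G_lower {X Y : Type*} [Fintype X] [Fintype Y] (Q : Y → ℝ) (hQ : ∀ y, 0 < Q y)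
    (hQ1 : ∀ y, Q y ≤ 1) (c : X → ℝ) (M : X × Y → ℝ) (hM : ∀ p, 0 ≤ M p) :
    - (Fintype.card (X × Y) : ℝ) - ∑ a, c a * Real.log (c a) ≤ G Q c M := by
  have h1 : ∑ p : X × Y, (-1 : ℝ) ≤ ∑ p, M p * Real.log (M p) := by
    refine Finset.sum_le_sum (fun p _ => ?_)
    have := (phi_diff (le_refl 0) (hM p) (le_max_left (M p) 1) (le_max_right _ _)).2
    simp only [zero_mul] at this
    linarith
  have h2 : ∑ p, M p * Real.log (Q p.2) ≤ 0 :=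
    Finset.sum_nonpos (fun p _ => mul_nonpos_of_nonneg_of_nonpos (hM p)
      (Real.log_nonpos (hQ _).le (hQ1 _)))
  simp only [Finset.sum_const, card_univ, nsmul_eq_mul] at h1
  simp only [G]
  linarith

lemma obj_eq {X Y : Type*} [Fintype X] [Fintype Y] (Q : Y → ℝ) (hQ : ∀ y, 0 < Q y)
    (n : ℝ) (hn : 0 < n) (c : X → ℝ) (hc : ∀ a, 0 ≤ c a) (V : X → Y → ℝ) (hV : IsChannel V) :
    n * (mutualInfoR (fun a => c a / n) V + klDivR (fun y => ∑ a, c a / n * V a y) Q)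
      = G Q c (fun p => c p.1 * V p.1 p.2) := by
  set W : Y → ℝ := fun y => ∑ a, c a / n * V a y with hW
  have hterm : ∀ a y, 0 ≤ c a / n * V a y := fun a y =>
    mul_nonneg (div_nonneg (hc a) hn.le) (hV.1 a y)
  have hkl : klDivR W Q = ∑ p : X × Y, c p.1 / n * V p.1 p.2 * Real.log (W p.2 / Q p.2) := by
    rw [Fintype.sum_prod_type_right]
    unfold klDivR
    refine Finset.sum_congr rfl (fun y _ => ?_)
    simp only
    rw [← Finset.sum_mul]
    split_ifs with h
    · have : ∑ a, c a / n * V a y = 0 := h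
      rw [this, zero_mul]
    · rfl
  have hc2 : ∑ a, c a * Real.log (c a) = ∑ p : X × Y, c p.1 * V p.1 p.2 * Real.log (c p.1) := by
    rw [Fintype.sum_prod_type]
    refine Finset.sum_congr rfl (fun a _ => ?_)
    simp only
    rw [← Finset.sum_mul, ← Finset.mul_sum, hV.2 a, mul_one]
  rw [hkl]
  unfold mutualInfoR klDivR G
  rw [hc2, ← Finset.sum_add_distrib, Finset.mul_sum, ← Finset.sum_sub_distrib, ← Finset.sum_sub_distrib]
  refine Finset.sum_congr rfl (fun p _ => ?_)
  obtain ⟨a, y⟩ := p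
  simp only
  have hWy : ∑ x, c x / n * V x y = W y := rfl
  rw [hWy]
  split_ifs with h
  · have h0 : c a * V a y = 0 := by
      have : c a * V a y = n * (c a / n * V a y) := by field_simp
      rw [this, h, mul_zero]
    rw [h, h0]; simp
  · have hca : c a ≠ 0 := by rintro e; apply h; rw [e]; simp
    have hv : V a y ≠ 0 := by rintro e; apply h; rw [e]; simp
    have hWp : W y ≠ 0 := by
      have : c a / n * V a y ≤ W y :=
        Finset.single_le_sum (f := fun a => c a / n * V a y) (fun a _ => hterm a y) (mem_univ a)
      have h2 := lt_of_le_of_ne (hterm a y) (Ne.symm h)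
      exact (lt_of_lt_of_le h2 this).ne'
    have e1 : c a / n * V a y / (c a / n * W y) = V a y / W y := by
      field_simp
    rw [e1, Real.log_div hv hWp, Real.log_div hWp (hQ y).ne', Real.log_mul hca hv]
    field_simp
    ring

section R
variable {X Y : Type*} [Fintype X] [Fintype Y]

lemma dist_eq (n : ℝ) (hn : 0 < n) (c : X → ℝ) (V d : X → Y → ℝ) (Δ : ℝ) :
    (∑ a, ∑ y, c a / n * V a y * d a y) ≤ Δ ↔
      ∑ p : X × Y, c p.1 * V p.1 p.2 * d p.1 p.2 ≤ n * Δ := by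
  rw [← Fintype.sum_prod_type' (f := fun a y => c a / n * V a y * d a y)]
  have : ∑ p : X × Y, c p.1 * V p.1 p.2 * d p.1 p.2
      = n * ∑ p : X × Y, c p.1 / n * V p.1 p.2 * d p.1 p.2 := by
    rw [Finset.mul_sum]
    refine Finset.sum_congr rfl (fun p _ => ?_)
    field_simp
  rw [this]
  exact (mul_le_mul_iff_right₀ hn).symm

lemma R_bdd (Q : Y → ℝ) (hQ : ∀ y, 0 < Q y) (hQ1 : ∀ y, Q y ≤ 1)
    (n : ℝ) (hn : 0 < n) (c : X → ℝ) (hc : ∀ a, 0 ≤ c a) (d : X → Y → ℝ) (Δ : ℝ) :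
    BddBelow {r : ℝ | ∃ V : X → Y → ℝ, IsChannel V ∧
    (∑ x, ∑ y, (fun a => c a / n) x * V x y * d x y) ≤ Δ ∧
    r = mutualInfoR (fun a => c a / n) V + klDivR (fun y => ∑ x, (fun a => c a / n) x * V x y) Q} := by
  refine ⟨(- (Fintype.card (X × Y) : ℝ) - ∑ a, c a * Real.log (c a)) / n, ?_⟩
  rintro r ⟨V, hV, -, rfl⟩
  rw [div_le_iff₀' hn, obj_eq Q hQ n hn c hc V hV]
  exact G_lower Q hQ hQ1 c _ (fun p => mul_nonneg (hc _) (hV.1 _ _))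

lemma R_le (Q : Y → ℝ) (hQ : ∀ y, 0 < Q y) (hQ1 : ∀ y, Q y ≤ 1) [Nonempty Y]
    (n : ℝ) (hn : 0 < n) (c : X → ℝ) (hc : ∀ a, 0 ≤ c a) (d : X → Y → ℝ) (Δ : ℝ)
    (M : X × Y → ℝ) (hM : ∀ p, 0 ≤ M p) (hr : ∀ a, ∑ b, M (a, b) = c a)
    (hd : ∑ p, M p * d p.1 p.2 ≤ n * Δ) :
    n * Rfun (fun a => c a / n) Q d Δ ≤ G Q c M := by
  classical
  set V : X → Y → ℝ := fun a b => if c a = 0 then (if b = Classical.arbitrary Y then 1 else 0)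
    else M (a, b) / c a with hVdef
  have hV : IsChannel V := by
    constructor
    · intro a b
      simp only [hVdef]
      split_ifs
      · exact zero_le_one
      · exact le_refl _
      · exact div_nonneg (hM _) (hc _)
    · intro a
      simp only [hVdef]
      split_ifs with h
      · simp
      · rw [← Finset.sum_div, hr, div_self h]
  have hMV : (fun p : X × Y => c p.1 * V p.1 p.2) = M := by
    funext ⟨a, b⟩
    simp only [hVdef]
    split_ifs with h h2
    · have := (Finset.sum_eq_zero_iff_of_nonneg (fun b _ => hM (a, b))).1 ((hr a).trans h) b (mem_univ b)
      rw [this, h]; simp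
    · have := (Finset.sum_eq_zero_iff_of_nonneg (fun b _ => hM (a, b))).1 ((hr a).trans h) b (mem_univ b)
      rw [this]; simp
    · field_simp
  have := obj_eq Q hQ n hn c hc V hV
  rw [hMV] at this
  rw [← this]
  refine mul_le_mul_of_nonneg_left ?_ hn.le
  refine csInf_le (R_bdd Q hQ hQ1 n hn c hc d Δ) ⟨V, hV, ?_, rfl⟩
  rw [dist_eq n hn]
  have h2 : ∀ p : X × Y, c p.1 * V p.1 p.2 = M p := fun p => congrFun hMV p
  simp only [h2]
  exact hd

lemma R_ge (Q : Y → ℝ)  (hQ : ∀ y, 0 < Q y)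
    (n : ℝ) (hn : 0 < n) (c : X → ℝ) (hc : ∀ a, 0 ≤ c a) (hcs : ∑ a, c a = n)
    (d : X → Y → ℝ) (Δ : ℝ) (hne : ∀ x, ∃ y, d x y ≤ Δ) :
    ∃ M : X × Y → ℝ, (∀ p, 0 ≤ M p) ∧ (∀ a, ∑ b, M (a, b) = c a) ∧
      (∑ p, M p * d p.1 p.2 ≤ n * Δ) ∧ G Q c M ≤ n * Rfun (fun a => c a / n) Q d Δ + 1 := by
  classical
  have hne' : {r : ℝ | ∃ V : X → Y → ℝ, IsChannel V ∧
    (∑ x, ∑ y, (fun a => c a / n) x * V x y * d x y) ≤ Δ ∧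
    r = mutualInfoR (fun a => c a / n) V + klDivR (fun y => ∑ x, (fun a => c a / n) x * V x y) Q}.Nonempty := by
    choose f hf using hne
    refine ⟨_, fun a b => if b = f a then 1 else 0, ⟨?_, ?_⟩, ?_, rfl⟩
    · intro a b; simp only; split_ifs <;> simp
    · intro a; simp
    · simp only [mul_ite, mul_one, mul_zero, ite_mul, zero_mul, Finset.sum_ite_eq', mem_univ, if_true]
      calc ∑ a, c a / n * d a (f a) ≤ ∑ a, c a / n * Δ := by
            refine Finset.sum_le_sum (fun a _ => ?_)
            exact mul_le_mul_of_nonneg_left (hf a) (div_nonneg (hc a) hn.le)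
        _ = Δ := by rw [← Finset.sum_mul, ← Finset.sum_div, hcs, div_self hn.ne', one_mul]
  obtain ⟨r, ⟨V, hV, hd, rfl⟩, hlt⟩ := exists_lt_of_csInf_lt hne'
    (show sInf _ < Rfun (fun a => c a / n) Q d Δ + 1 / n from lt_add_of_pos_right _ (by positivity))
  refine ⟨fun p => c p.1 * V p.1 p.2, fun p => mul_nonneg (hc _) (hV.1 _ _), ?_, ?_, ?_⟩
  · intro a
    simp only
    rw [← Finset.mul_sum, hV.2, mul_one]
  · exact (dist_eq n hn c V d Δ).1 hd
  · rw [← obj_eq Q hQ n hn c hc V hV]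
    have := mul_le_mul_of_nonneg_left hlt.le hn.le
    rw [mul_add n (Rfun _ _ _ _), mul_one_div_cancel hn.ne'] at this
    exact this

lemma round_exists (n : ℕ) (hn : 1 ≤ n) (Q : Y → ℝ) [Nonempty Y]
    (c : X → ℕ) (hcn : ∀ a, c a ≤ n)
    (d : X → Y → ℝ) (M : X × Y → ℝ) (hM : ∀ p, 0 ≤ M p)
    (hr : ∀ a, ∑ b, M (a, b) = c a) :
    ∃ N : X × Y → ℕ, (∀ a, ∑ b, N (a, b) = c a) ∧
      (∑ p, (N p : ℝ) * d p.1 p.2 ≤ ∑ p, M p * d p.1 p.2) ∧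
      G Q (fun a => (c a : ℝ)) (fun p => (N p : ℝ)) ≤ G Q (fun a => (c a : ℝ)) M +
        (∑ p : X × Y, (Fintype.card Y * (1 + Real.log n) + 1 + Fintype.card Y * |Real.log (Q p.2)|)) := by
  classical
  have hmin : ∀ a, ∃ b, ∀ b', d a b ≤ d a b' := fun a => Finite.exists_min (d a)
  choose f hf using hmin
  set S : X → ℕ := fun a => ∑ b ∈ univ.erase (f a), ⌊M (a, b)⌋₊ with hS
  have hMS : ∀ a, M (a, f a) + ∑ b ∈ univ.erase (f a), M (a, b) = c a := by
    intro a; rw [← hr a]; exact Finset.add_sum_erase univ (fun b => M (a,b)) (mem_univ (f a))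
  have hSle' : ∀ a, (S a : ℝ) ≤ ∑ b ∈ univ.erase (f a), M (a, b) := by
    intro a
    simp only [hS]; push_cast
    exact Finset.sum_le_sum (fun b _ => Nat.floor_le (hM _))
  have hSge : ∀ a, ∑ b ∈ univ.erase (f a), M (a, b) ≤ S a + Fintype.card Y := by
    intro a
    simp only [hS]; push_cast
    calc ∑ b ∈ univ.erase (f a), M (a, b) ≤ ∑ b ∈ univ.erase (f a), ((⌊M (a,b)⌋₊ : ℝ) + 1) :=
          Finset.sum_le_sum (fun b _ => (Nat.lt_floor_add_one _).le)
      _ ≤ _ := by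
          rw [Finset.sum_add_distrib]
          simp only [sum_const, nsmul_eq_mul, mul_one]
          have : (#(univ.erase (f a)) : ℝ) ≤ Fintype.card Y := by exact_mod_cast Finset.card_le_univ _
          linarith
  have hSle : ∀ a, S a ≤ c a := by
    intro a
    have h1 := hMS a
    have h2 := hSle' a
    have h3 := hM (a, f a)
    exact_mod_cast (show (S a : ℝ) ≤ c a by linarith)
  set N : X × Y → ℕ := fun p => if p.2 = f p.1 then c p.1 - S p.1 else ⌊M p⌋₊ with hN
  have hNf : ∀ a, (N (a, f a) : ℝ) = c a - S a := by
    intro a; simp only [hN, if_true]; rw [Nat.cast_sub (hSle a)]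
  have hNo : ∀ a b, b ≠ f a → N (a, b) = ⌊M (a, b)⌋₊ := by
    intro a b h; simp only [hN, if_neg h]
  have hrow : ∀ a, ∑ b, N (a, b) = c a := by
    intro a
    rw [← Finset.add_sum_erase univ _ (mem_univ (f a))]
    have : ∑ b ∈ univ.erase (f a), N (a, b) = S a :=
      Finset.sum_congr rfl (fun b hb => hNo a b (Finset.ne_of_mem_erase hb))
    rw [this]
    simp only [hN, if_true]
    have := hSle a
    omega
  have hY1 : (1:ℝ) ≤ Fintype.card Y := by exact_mod_cast Fintype.card_pos
  have hup : ∀ a b, b = f a → M (a, b) ≤ N (a, b) ∧ (N (a,b) : ℝ) ≤ M (a,b) + Fintype.card Y := by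
    rintro a b rfl
    rw [hNf]
    have h1 := hMS a
    have h2 := hSle' a
    have h3 := hSge a
    constructor <;> linarith
  have hdn : ∀ a b, b ≠ f a → (N (a, b) : ℝ) ≤ M (a,b) ∧ M (a,b) ≤ N (a,b) + Fintype.card Y := by
    intro a b h
    rw [hNo a b h]
    exact ⟨Nat.floor_le (hM _), by linarith [Nat.lt_floor_add_one (M (a,b))]⟩
  have hNle : ∀ p, (N p : ℝ) ≤ n := fun p => by
    exact_mod_cast
    (Finset.single_le_sum (f := fun b => N (p.1, b)) (fun _ _ => Nat.zero_le _) (mem_univ p.2)).trans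
      ((hrow p.1).le.trans (hcn p.1))
  have hMle : ∀ p, M p ≤ n := fun p => by
    have h1 := Finset.single_le_sum (f := fun b => M (p.1, b)) (fun _ _ => hM _) (mem_univ p.2)
    rw [hr] at h1
    exact h1.trans (by exact_mod_cast hcn p.1)
  have hn1 : (1:ℝ) ≤ n := by exact_mod_cast hn
  have hln : 0 ≤ Real.log n := Real.log_nonneg hn1
  refine ⟨N, hrow, ?_, ?_⟩
  · rw [Fintype.sum_prod_type, Fintype.sum_prod_type]
    refine Finset.sum_le_sum (fun a _ => ?_)
    have h1 : ∑ b, ((N (a,b) : ℝ) - M (a,b)) * (d a b - d a (f a)) ≤ 0 := by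
      refine Finset.sum_nonpos (fun b _ => ?_)
      by_cases h : b = f a
      · rw [h]; simp
      · exact mul_nonpos_of_nonpos_of_nonneg (by linarith [(hdn a b h).1]) (by linarith [hf a b])
    have h2 : ∑ b, (N (a,b) : ℝ) = c a := by exact_mod_cast hrow a
    have h3 : ∑ b, ((N (a,b) : ℝ) - M (a,b)) * (d a b - d a (f a))
        = (∑ b, (N (a,b) : ℝ) * d a b - ∑ b, M (a,b) * d a b)
          - (∑ b, (N (a,b) : ℝ) - ∑ b, M (a,b)) * d a (f a) := by
      rw [← Finset.sum_sub_distrib, ← Finset.sum_sub_distrib, Finset.sum_mul, ← Finset.sum_sub_distrib]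
      exact Finset.sum_congr rfl (fun b _ => by ring)
    rw [h3, h2, hr, sub_self, zero_mul, sub_zero] at h1
    simp only
    linarith
  · have hp : ∀ p : X × Y, (N p : ℝ) * Real.log (N p) - (N p : ℝ) * Real.log (Q p.2) ≤
        M p * Real.log (M p) - M p * Real.log (Q p.2) +
        (Fintype.card Y * (1 + Real.log n) + 1 + Fintype.card Y * |Real.log (Q p.2)|) := by
      rintro ⟨a, b⟩
      have hab : |(M (a,b) - N (a,b))| ≤ Fintype.card Y := by
        rw [abs_le]
        by_cases h : b = f a
        · have := hup a b h; constructor <;> linarith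
        · have := hdn a b h; constructor <;> linarith
      have hq : (M (a,b) - N (a,b)) * Real.log (Q b) ≤ Fintype.card Y * |Real.log (Q b)| := by
        refine (le_abs_self _).trans ?_
        rw [abs_mul]
        gcongr
      have hphi : (N (a,b) : ℝ) * Real.log (N (a,b)) - M (a,b) * Real.log (M (a,b))
          ≤ Fintype.card Y * (1 + Real.log n) + 1 := by
        by_cases h : b = f a
        · have h1 := hup a b h
          have h2 := (phi_diff (hM (a,b)) h1.1 (hNle _) hn1).1
          have h3 : ((N (a,b) : ℝ) - M (a,b)) * (1 + Real.log n) ≤ Fintype.card Y * (1 + Real.log n) := by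
            gcongr
            linarith
          linarith
        · have h1 := hdn a b h
          have h2 := (phi_diff (Nat.cast_nonneg _) h1.1 (hMle _) hn1).2
          have : 0 ≤ (Fintype.card Y : ℝ) * (1 + Real.log n) := by positivity
          linarith
      simp only
      nlinarith
    have := Finset.sum_le_sum (s := univ) (fun p _ => hp p)
    simp only [Finset.sum_add_distrib, Finset.sum_sub_distrib] at this ⊢
    simp only [G]
    linarith

end R


/-- final error constant -/
lemma main_bound {X Y : Type*} [Fintype X] [DecidableEq X] [Fintype Y] [Nonempty Y]
    (Q : Y → ℝ) (hQ : ∀ y, 0 < Q y) (hQ1 : ∀ y, Q y ≤ 1)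
    (d : X → Y → ℝ) (Δ : ℝ) (hne : ∀ x, ∃ y, d x y ≤ Δ) (n : ℕ) (hn : 1 ≤ n) (x : Fin n → X) :
    |(-(1 / (n : ℝ))) * Real.log (ballProbN Q d Δ x) - Rfun (empType x) Q d Δ| ≤
      (E X Y n + Fintype.card (X × Y) * Real.log (n+1) + 1 +
        ∑ p : X × Y, (Fintype.card Y * (1 + Real.log (n+1)) + 1
          + Fintype.card Y * |Real.log (Q p.2)|)) / n := by
  classical
  have hn0 : (0:ℝ) < n := by exact_mod_cast hn
  have hemp : empType x = fun a => (cnt x a : ℝ) / n := by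
    funext a; simp [empType, cnt]
  rw [hemp]
  set c : X → ℝ := fun a => (cnt x a : ℝ) with hcdef
  set R := Rfun (fun a => (cnt x a : ℝ) / n) Q d Δ with hR
  have hc : ∀ a, 0 ≤ c a := fun a => Nat.cast_nonneg _
  have hcs : ∑ a, c a = n := by
    have := sum_cnt x (fun _ => (1:ℝ))
    simp at this
    exact this.symm
  have hdist : ∀ y : Fin n → Y, ∑ i, d (x i) (y i) = ∑ p, (jc x y p : ℝ) * d p.1 p.2 := fun y =>
    sum_cnt (fun i => (x i, y i)) (fun p => d p.1 p.2)
  have hprodpos : ∀ y : Fin n → Y, 0 < ∏ i, Q (y i) := fun y => Finset.prod_pos (fun i _ => hQ _)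
  -- lower bound
  obtain ⟨M, hM, hr, hMd, hMG⟩ := R_ge Q hQ n hn0 c hc hcs d Δ hne
  obtain ⟨N, hNr, hNd, hNG⟩ := round_exists n hn Q (cnt x) (cnt_le x) d M hM hr
  obtain ⟨t, ht, htb⟩ := class_mass Q hQ x N hNr
  have hlow : Real.exp t ≤ ballProbN Q d Δ x := by
    rw [← ht, ballProbN]
    refine Finset.sum_le_sum (fun y _ => ?_)
    by_cases h : jc x y = N
    · rw [if_pos h, if_pos]
      rw [hdist, h]
      linarith
    · rw [if_neg h]
      split_ifs
      · exact (hprodpos y).le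
      · exact le_refl _
  have hlog1 : t ≤ Real.log (ballProbN Q d Δ x) := by
    rw [← Real.log_exp t]; exact Real.log_le_log (Real.exp_pos t) hlow
  have hBpos : 0 < ballProbN Q d Δ x := lt_of_lt_of_le (Real.exp_pos t) hlow
  -- upper bound
  have hupp : ballProbN Q d Δ x ≤
      Real.exp (Fintype.card (X × Y) * Real.log (n+1) + (E X Y n - n * R)) := by
    have hmaps : ∀ y ∈ (univ : Finset (Fin n → Y)),
        jc x y ∈ Fintype.piFinset (fun _ : X × Y => Finset.range (n+1)) := by
      intro y _
      rw [Fintype.mem_piFinset]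
      intro p
      rw [Finset.mem_range]
      exact Nat.lt_succ_of_le (cnt_le _ p)
    rw [ballProbN, ← Finset.sum_fiberwise_of_maps_to hmaps]
    have hcard : (#(Fintype.piFinset (fun _ : X × Y => Finset.range (n+1))) : ℝ)
        = Real.exp (Fintype.card (X × Y) * Real.log (n+1)) := by
      rw [Fintype.card_piFinset]
      simp only [Finset.card_range, Finset.prod_const, card_univ]
      rw [mul_comm, Real.exp_mul, Real.exp_log (by positivity), Real.rpow_natCast]
      push_cast; rfl
    rw [Real.exp_add, ← hcard,
      ← nsmul_eq_mul _ (Real.exp (E X Y n - n * R))]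
    apply Finset.sum_le_card_nsmul
    intro N _
    rw [Finset.sum_filter]
    by_cases hex : (∃ y0 : Fin n → Y, jc x y0 = N) ∧ ∑ p, (N p : ℝ) * d p.1 p.2 ≤ n * Δ
    · obtain ⟨⟨y0, rfl⟩, hdN⟩ := hex
      obtain ⟨s, hs, hsb⟩ := class_mass Q hQ x (jc x y0) (jc_row x y0)
      refine le_trans (b := Real.exp s) ?_ ?_
      · rw [← hs]
        refine Finset.sum_le_sum (fun y _ => ?_)
        split_ifs
        · exact le_refl _
        · exact (hprodpos y).le
        · exact le_refl _
      · apply Real.exp_le_exp.2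
        have h1 := R_le Q hQ hQ1 n hn0 c hc d Δ (fun p => (jc x y0 p : ℝ))
          (fun p => Nat.cast_nonneg _) (fun a => by simp only [hcdef]; exact_mod_cast jc_row x y0 a) hdN
        have h2 := (abs_le.1 hsb).2
        linarith
    · refine le_trans (b := (0:ℝ)) (Finset.sum_nonpos (fun y _ => ?_)) (Real.exp_pos _).le
      split_ifs with h1 h2
      · exfalso
        apply hex
        refine ⟨⟨y, h1⟩, ?_⟩
        rw [← h1, ← hdist]; exact h2
      · exact le_refl _
      · exact le_refl _
  have hlog2 := Real.log_le_log hBpos hupp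
  rw [Real.log_exp] at hlog2
  have hlogn : Real.log n ≤ Real.log ((n:ℝ)+1) := Real.log_le_log hn0 (by linarith)
  have hsum : (∑ p : X × Y, (Fintype.card Y * (1 + Real.log n) + 1 + Fintype.card Y * |Real.log (Q p.2)|))
      ≤ ∑ p : X × Y, (Fintype.card Y * (1 + Real.log (n+1)) + 1 + Fintype.card Y * |Real.log (Q p.2)|) := by
    refine Finset.sum_le_sum (fun p _ => ?_)
    gcongr
  have hl0 : 0 ≤ Real.log ((n:ℝ)+1) := Real.log_nonneg (by linarith)
  have hs0 : 0 ≤ ∑ p : X × Y, ((Fintype.card Y : ℝ) * (1 + Real.log (n+1)) + 1 + Fintype.card Y * |Real.log (Q p.2)|) :=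
    Finset.sum_nonneg (fun p _ => by positivity)
  have hc0 : 0 ≤ (Fintype.card (X × Y) : ℝ) * Real.log (n+1) := by positivity
  have e : (-(1 / (n : ℝ))) * Real.log (ballProbN Q d Δ x) - R
      = (-Real.log (ballProbN Q d Δ x) - n * R) / n := by field_simp
  rw [e, abs_div, abs_of_pos hn0]
  gcongr
  have htb' := (abs_le.1 htb).1
  rw [abs_le]
  constructor <;> linarith

end BPE

/-- Method-of-types estimate: uniformly over `x ∈ 𝒳^n`,
`(−1/n) log Q^{⊗n}(A_Δ(x)) = R(P_x, Q_{X̂}|Δ) + o(1)` as `n → ∞`, where `P_x`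
is the empirical type of `x`. -/
theorem ball_prob_exponent {𝒳 𝒳' : Type*} [Fintype 𝒳] [DecidableEq 𝒳]
    [Fintype 𝒳'] (Q : 𝒳' → ℝ) (hQpos : ∀ y, 0 < Q y) (hQ1 : ∑ y, Q y = 1)
    (d : 𝒳 → 𝒳' → ℝ) (hd : ∀ x y, 0 ≤ d x y) (Δ : ℝ) (hΔ : 0 ≤ Δ)
    (hne : ∀ x, ∃ y, d x y ≤ Δ) :
    ∀ ε > 0, ∃ N : ℕ, ∀ n ≥ N, ∀ x : Fin n → 𝒳,
      |(-(1 / (n : ℝ))) * Real.log (ballProbN Q d Δ x)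
          - Rfun (empType x) Q d Δ| ≤ ε := by
  classical
  intro ε hε
  rcases isEmpty_or_nonempty 𝒳' with hY | hY
  · simp at hQ1
  have hQle : ∀ y, Q y ≤ 1 := fun y => by
    rw [← hQ1]
    exact Finset.single_le_sum (f := Q) (fun y _ => (hQpos y).le) (Finset.mem_univ y)
  set A : ℝ := (Fintype.card 𝒳 : ℝ) + Fintype.card (𝒳 × 𝒳') + 1 +
    ∑ p : 𝒳 × 𝒳', ((Fintype.card 𝒳' : ℝ) + 1 + Fintype.card 𝒳' * |Real.log (Q p.2)|) with hA
  set B : ℝ := (Fintype.card 𝒳 : ℝ) + Fintype.card (𝒳 × 𝒳') + Fintype.card (𝒳 × 𝒳') +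
    ∑ p : 𝒳 × 𝒳', (Fintype.card 𝒳' : ℝ) with hB
  have hlim1 : Filter.Tendsto (fun n : ℕ => (1 : ℝ) / n) Filter.atTop (nhds 0) :=
    tendsto_one_div_atTop_nhds_zero_nat
  have hlim2 : Filter.Tendsto (fun n : ℕ => Real.log ((n:ℝ)+1) / n) Filter.atTop (nhds 0) := by
    have h1 : Filter.Tendsto (fun t : ℝ => Real.log t / t) Filter.atTop (nhds 0) := by
      simpa using Real.isLittleO_log_id_atTop.tendsto_div_nhds_zero
    have h2 : Filter.Tendsto (fun n : ℕ => (n:ℝ) + 1) Filter.atTop Filter.atTop :=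
      Filter.tendsto_atTop_add_const_right _ _ tendsto_natCast_atTop_atTop
    have h3 := (h1.comp h2).mul (hlim1.const_add 1)
    simp only [zero_mul] at h3
    refine h3.congr' ?_
    filter_upwards [Filter.eventually_ge_atTop 1] with n hn
    have : (0:ℝ) < n := by exact_mod_cast hn
    simp only [Function.comp]
    field_simp
  have hlim : Filter.Tendsto (fun n : ℕ => A * ((1:ℝ) / n) + B * (Real.log ((n:ℝ)+1) / n))
      Filter.atTop (nhds 0) := by
    simpa using (hlim1.const_mul A).add (hlim2.const_mul B)
  have hev := (hlim.eventually (gt_mem_nhds hε)).and (Filter.eventually_ge_atTop 1)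
  obtain ⟨N, hN⟩ := Filter.eventually_atTop.1 hev
  refine ⟨N, fun n hn x => ?_⟩
  obtain ⟨h1, h2⟩ := hN n hn
  refine (BPE.main_bound Q hQpos hQle d Δ hne n h2 x).trans (le_trans (le_of_eq ?_) h1.le)
  have : (0:ℝ) < n := by exact_mod_cast h2
  rw [hA, hB, BPE.E]
  simp only [Finset.sum_add_distrib, Finset.sum_const, nsmul_eq_mul]
  field_simp
  ring
end

section
/- Let X^n be i.i.d. with per-letter distribution P_X on finite 𝒳 and let Q_{X̂} be a distribution on finite 𝒳̂ defining the i.i.d. asynchronous guessing strategy Q_{X̂}^{⊗n}. For any positive integer ρ, lim_{n→∞} (1/n) log E[G_ρ(X^n|Q_{X̂}^n)] = max_{Q_X} [ρ R(Q_X,Q_{X̂}|Δ) − D(Q_X‖P_X)], where the maximum is over all distributions Q_X on 𝒳. -/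
open scoped BigOperators

/-- `ρ`-th moment of the number of guesses of an i.i.d. asynchronous strategy
`Q^{⊗n}` for an i.i.d. source `P^{⊗n}`: the number of guesses given `x` is
geometric with parameter `Q^{⊗n}(A_Δ(x))`. -/
noncomputable def guessMomentN {𝒳 𝒳' : Type*} [Fintype 𝒳] [Fintype 𝒳']
    (P : 𝒳 → ℝ) (Q : 𝒳' → ℝ) (d : 𝒳 → 𝒳' → ℝ) (Δ : ℝ) (ρ : ℕ) (n : ℕ) : ℝ :=
  ∑ x : Fin n → 𝒳, (∏ i, P (x i)) *
    ∑' k : ℕ, ((k : ℝ) + 1) ^ ρ *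
      ((1 - ballProbN Q d Δ x) ^ k * ballProbN Q d Δ x)

namespace IidGuess

lemma sum_prod_eq {κ : Type*} [Fintype κ] {n : ℕ} (h : Fin n → κ → ℝ) :
    ∑ y : Fin n → κ, ∏ i, h i (y i) = ∏ i, ∑ b, h i b :=
  (Fintype.prod_sum h).symm

lemma sum_prod_one {κ : Type*} [Fintype κ] {n : ℕ} (h : Fin n → κ → ℝ)
    (h1 : ∀ i, ∑ b, h i b = 1) :
    ∑ y : Fin n → κ, ∏ i, h i (y i) = 1 := by
  rw [sum_prod_eq]; simp [h1]

lemma sum_prod_marg {κ : Type*} [Fintype κ] {n : ℕ} (h : Fin n → κ → ℝ)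
    (h1 : ∀ i, ∑ b, h i b = 1) (j : Fin n) (g : κ → ℝ) :
    ∑ y : Fin n → κ, (∏ i, h i (y i)) * g (y j) = ∑ b, h j b * g b := by
  have : ∀ y : Fin n → κ, (∏ i, h i (y i)) * g (y j)
      = ∏ i, (fun i b => h i b * if i = j then g b else 1) i (y i) := by
    intro y
    rw [Finset.prod_mul_distrib]
    congr 1
    simp
  rw [Finset.sum_congr rfl fun y _ => this y,
    sum_prod_eq (fun i b => h i b * if i = j then g b else 1)]
  rw [Finset.prod_eq_single j]
  · simp
  · intro b _ hb
    simp [hb, h1]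
  · simp

lemma sum_prod_sum {κ : Type*} [Fintype κ] {n : ℕ} (h : Fin n → κ → ℝ)
    (h1 : ∀ i, ∑ b, h i b = 1) (g : Fin n → κ → ℝ) :
    ∑ y : Fin n → κ, (∏ i, h i (y i)) * ∑ i, g i (y i) = ∑ i, ∑ b, h i b * g i b := by
  simp_rw [Finset.mul_sum]
  rw [Finset.sum_comm]
  exact Finset.sum_congr rfl fun i _ => sum_prod_marg h h1 i (g i)

/-- the objective in simplified form -/
lemma obj_eq {ι κ : Type*} [Fintype ι] [Fintype κ] (QX : ι → ℝ) (h0 : ∀ a, 0 ≤ QX a)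
    (V : ι → κ → ℝ) (hV : IsChannel V) (Q : κ → ℝ) (hQ : ∀ b, 0 < Q b) :
    mutualInfoR QX V + klDivR (fun y => ∑ x, QX x * V x y) Q
      = ∑ a, ∑ b, QX a * V a b * (Real.log (V a b) - Real.log (Q b)) := by
  unfold mutualInfoR klDivR
  rw [Fintype.sum_prod_type]
  have h2 : (∑ x, if (∑ a, QX a * V a x) = 0 then 0 else
      (∑ a, QX a * V a x) * Real.log ((∑ a, QX a * V a x) / Q x))
      = ∑ a, ∑ b, QX a * V a b * (Real.log (∑ a', QX a' * V a' b) - Real.log (Q b)) := by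
    rw [Finset.sum_comm]
    refine Finset.sum_congr rfl fun b _ => ?_
    rw [← Finset.sum_mul]
    split_ifs with h
    · rw [h]; simp
    · rw [Real.log_div h (hQ b).ne']
  rw [h2, ← Finset.sum_add_distrib]
  refine Finset.sum_congr rfl fun a _ => ?_
  rw [← Finset.sum_add_distrib]
  refine Finset.sum_congr rfl fun b _ => ?_
  simp only
  split_ifs with h
  · rw [h]; simp
  · have hm : 0 < ∑ x, QX x * V x b := by
      refine lt_of_lt_of_le (lt_of_le_of_ne (mul_nonneg (h0 a) (hV.1 a b)) (Ne.symm h)) ?_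
      exact Finset.single_le_sum (f := fun x => QX x * V x b)
        (fun x _ => mul_nonneg (h0 x) (hV.1 x b)) (Finset.mem_univ a)
    have ha : QX a ≠ 0 := left_ne_zero_of_mul h
    have hb : V a b ≠ 0 := right_ne_zero_of_mul h
    rw [mul_div_mul_left _ _ ha, Real.log_div hb hm.ne']
    ring

lemma gibbs {κ : Type*} [Fintype κ] (v Q : κ → ℝ) (hv : ∀ b, 0 ≤ v b) (hQ : ∀ b, 0 < Q b)
    (hs : ∑ b, v b = 1) (hQ1 : ∑ b, Q b = 1) :
    0 ≤ ∑ b, v b * (Real.log (v b) - Real.log (Q b)) := by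
  have : ∑ b, (v b - Q b) ≤ ∑ b, v b * (Real.log (v b) - Real.log (Q b)) := by
    refine Finset.sum_le_sum fun b _ => ?_
    rcases (hv b).eq_or_lt with h | h
    · rw [← h]; simp [(hQ b).le]
    · have := Real.log_le_sub_one_of_pos (div_pos (hQ b) h)
      rw [Real.log_div (hQ b).ne' h.ne'] at this
      have h3 := mul_le_mul_of_nonneg_left this h.le
      have : v b * (Q b / v b - 1) = Q b - v b := by field_simp
      nlinarith
  rw [Finset.sum_sub_distrib, hs, hQ1] at this
  linarith

lemma kl_nonneg {κ : Type*} [Fintype κ] (v P : κ → ℝ) (hv : ∀ b, 0 ≤ v b) (hP : ∀ b, 0 ≤ P b)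
    (hs : ∑ b, v b = 1) (hP1 : ∑ b, P b = 1) (hac : ∀ a, P a = 0 → v a = 0) :
    0 ≤ klDivR v P := by
  have : ∑ b, (v b - P b) ≤ klDivR v P := by
    unfold klDivR
    refine Finset.sum_le_sum fun b _ => ?_
    split_ifs with h
    · rw [h]; simp [(hP b)]
    · have hp : 0 < P b := lt_of_le_of_ne (hP b) (fun h' => h (hac b h'.symm))
      have h : 0 < v b := lt_of_le_of_ne (hv b) (Ne.symm h)
      have := Real.log_le_sub_one_of_pos (div_pos hp h)
      rw [Real.log_div hp.ne' h.ne'] at this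
      rw [Real.log_div h.ne' hp.ne']
      have h3 := mul_le_mul_of_nonneg_left this h.le
      have : v b * (P b / v b - 1) = P b - v b := by field_simp
      nlinarith
  rw [Finset.sum_sub_distrib, hs, hP1] at this
  linarith

section R
variable {ι κ : Type*} [Fintype ι] [Fintype κ]

lemma R_bddBelow (QX : ι → ℝ) (h0 : ∀ a, 0 ≤ QX a)
    (Q : κ → ℝ) (hQ : ∀ b, 0 < Q b) (hQ1 : ∑ b, Q b = 1) (d : ι → κ → ℝ) (Δ : ℝ) :
    BddBelow {r : ℝ | ∃ V : ι → κ → ℝ, IsChannel V ∧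
    (∑ x, ∑ y, QX x * V x y * d x y) ≤ Δ ∧
    r = mutualInfoR QX V + klDivR (fun y => ∑ x, QX x * V x y) Q} := by
  refine ⟨0, ?_⟩
  rintro r ⟨V, hV, -, rfl⟩
  rw [obj_eq QX h0 V hV Q hQ]
  refine Finset.sum_nonneg fun a _ => ?_
  simp_rw [mul_assoc]
  rw [← Finset.mul_sum]
  exact mul_nonneg (h0 a) (gibbs _ _ (hV.1 a) hQ (hV.2 a) hQ1)

lemma R_le (QX : ι → ℝ) (h0 : ∀ a, 0 ≤ QX a)
    (Q : κ → ℝ) (hQ : ∀ b, 0 < Q b) (hQ1 : ∑ b, Q b = 1) (d : ι → κ → ℝ) (Δ : ℝ)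
    (V : ι → κ → ℝ) (hV : IsChannel V) (hd : (∑ x, ∑ y, QX x * V x y * d x y) ≤ Δ) :
    Rfun QX Q d Δ ≤ ∑ a, ∑ b, QX a * V a b * (Real.log (V a b) - Real.log (Q b)) := by
  rw [← obj_eq QX h0 V hV Q hQ]
  exact csInf_le (R_bddBelow QX h0 Q hQ hQ1 d Δ) ⟨V, hV, hd, rfl⟩

lemma det_feasible [DecidableEq κ] (QX : ι → ℝ) (h0 : ∀ a, 0 ≤ QX a) (h1 : ∑ a, QX a = 1)
    (d : ι → κ → ℝ) (Δ : ℝ) (ys : ι → κ) (hys : ∀ a, d a (ys a) ≤ Δ) :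
    IsChannel (fun a b => if b = ys a then (1:ℝ) else 0) ∧
    (∑ x, ∑ y, QX x * (if y = ys x then (1:ℝ) else 0) * d x y) ≤ Δ := by
  refine ⟨⟨fun a b => by dsimp only; split_ifs <;> norm_num, fun a => by simp⟩, ?_⟩
  calc _ = ∑ x, QX x * d x (ys x) := by simp
    _ ≤ ∑ x, QX x * Δ := Finset.sum_le_sum fun x _ => mul_le_mul_of_nonneg_left (hys x) (h0 x)
    _ = Δ := by rw [← Finset.sum_mul, h1, one_mul]

lemma neglog_le (Q : κ → ℝ) (hQ : ∀ b, 0 < Q b) (hQ1 : ∑ b, Q b = 1) (b : κ) :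
    0 ≤ -Real.log (Q b) ∧ -Real.log (Q b) ≤ ∑ b, -Real.log (Q b) := by
  have h : ∀ b, 0 ≤ -Real.log (Q b) := fun b => by
    have : Q b ≤ 1 := hQ1 ▸ Finset.single_le_sum (fun x _ => (hQ x).le) (Finset.mem_univ b)
    linarith [Real.log_nonpos (hQ b).le this]
  exact ⟨h b, Finset.single_le_sum (f := fun b => -Real.log (Q b)) (fun x _ => h x)
    (Finset.mem_univ b)⟩

lemma R_upper (QX : ι → ℝ) (h0 : ∀ a, 0 ≤ QX a) (h1 : ∑ a, QX a = 1)
    (Q : κ → ℝ) (hQ : ∀ b, 0 < Q b) (hQ1 : ∑ b, Q b = 1) (d : ι → κ → ℝ) (Δ : ℝ)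
    (ys : ι → κ) (hys : ∀ a, d a (ys a) ≤ Δ) :
    Rfun QX Q d Δ ≤ ∑ b, -Real.log (Q b) := by
  classical
  obtain ⟨hc, hd⟩ := det_feasible QX h0 h1 d Δ ys hys
  refine (R_le QX h0 Q hQ hQ1 d Δ _ hc hd).trans ?_
  calc _ = ∑ x, QX x * -Real.log (Q (ys x)) := by simp
    _ ≤ ∑ x, QX x * ∑ b, -Real.log (Q b) := Finset.sum_le_sum fun x _ =>
      mul_le_mul_of_nonneg_left (neglog_le Q hQ hQ1 _).2 (h0 x)
    _ = _ := by rw [← Finset.sum_mul, h1, one_mul]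

lemma R_approx (QX : ι → ℝ) (h0 : ∀ a, 0 ≤ QX a) (h1 : ∑ a, QX a = 1)
    (Q : κ → ℝ) (hQ : ∀ b, 0 < Q b) (d : ι → κ → ℝ) (Δ : ℝ)
    (ys : ι → κ) (hys : ∀ a, d a (ys a) ≤ Δ) (ε : ℝ) (hε : 0 < ε) :
    ∃ V : ι → κ → ℝ, IsChannel V ∧ (∑ x, ∑ y, QX x * V x y * d x y) ≤ Δ ∧
      ∑ a, ∑ b, QX a * V a b * (Real.log (V a b) - Real.log (Q b)) < Rfun QX Q d Δ + ε := by
  classical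
  obtain ⟨hc, hd⟩ := det_feasible QX h0 h1 d Δ ys hys
  obtain ⟨r, ⟨V, hV, hdV, rfl⟩, hr⟩ := exists_lt_of_csInf_lt
    (s := {r : ℝ | ∃ V : ι → κ → ℝ, IsChannel V ∧
    (∑ x, ∑ y, QX x * V x y * d x y) ≤ Δ ∧
    r = mutualInfoR QX V + klDivR (fun y => ∑ x, QX x * V x y) Q})
    ⟨_, _, hc, hd, rfl⟩ (show _ < Rfun QX Q d Δ + ε from lt_add_of_pos_right _ hε)
  exact ⟨V, hV, hdV, by rwa [← obj_eq QX h0 V hV Q hQ]⟩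

end R

/-- geometric moments -/
lemma geom_moment (q : ℝ) (h0 : 0 < q) (h1 : q ≤ 1) (ρ : ℕ) :
    (q⁻¹) ^ ρ ≤ ∑' k : ℕ, ((k : ℝ) + 1) ^ ρ * ((1 - q) ^ k * q) ∧
    ∑' k : ℕ, ((k : ℝ) + 1) ^ ρ * ((1 - q) ^ k * q) ≤ ρ.factorial * (q⁻¹) ^ ρ := by
  have hr : ‖1 - q‖ < 1 := by
    rw [Real.norm_eq_abs, abs_lt]; constructor <;> linarith
  have hr0 : 0 ≤ 1 - q := by linarith
  have hub : ∀ k : ℕ, ((k : ℝ) + 1) ^ ρ * ((1 - q) ^ k * q) ≤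
      ρ.factorial * q * (((k + ρ).choose ρ : ℕ) * (1 - q) ^ k) := by
    intro k
    have h : ((k : ℝ) + 1) ^ ρ ≤ ρ.factorial * ((k + ρ).choose ρ : ℕ) := by
      have := Nat.pow_succ_le_ascFactorial (k + 1) ρ
      rw [Nat.ascFactorial_eq_factorial_mul_choose] at this
      exact_mod_cast this
    calc _ ≤ (ρ.factorial * ((k + ρ).choose ρ : ℕ) : ℝ) * ((1 - q) ^ k * q) :=
          mul_le_mul_of_nonneg_right h (by positivity)
      _ = _ := by ring
  have hsub := (hasSum_choose_mul_geometric_of_norm_lt_one ρ hr).mul_left (ρ.factorial * q)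
  have hsum : Summable fun k : ℕ => ((k : ℝ) + 1) ^ ρ * ((1 - q) ^ k * q) :=
    Summable.of_nonneg_of_le (fun k => by positivity) hub hsub.summable
  constructor
  · have e1 := hasSum_geometric_of_norm_lt_one hr
    have e2 := hasSum_coe_mul_geometric_of_norm_lt_one hr
    have hl := ((e1.mul_left ((q⁻¹) ^ ρ * q * (1 + ρ * (q - 1)))).add
      (e2.mul_left ((q⁻¹) ^ ρ * q * (ρ * q))))
    have hval : (q⁻¹) ^ ρ * q * (1 + ρ * (q - 1)) * (1 - (1 - q))⁻¹ +
      (q⁻¹) ^ ρ * q * (ρ * q) * ((1 - q) / (1 - (1 - q)) ^ 2) = (q⁻¹) ^ ρ := by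
      rw [sub_sub_cancel]
      generalize (q⁻¹) ^ ρ = z
      field_simp
      ring
    rw [hval] at hl
    refine hasSum_le (fun k => ?_) hl hsum.hasSum
    have hb := one_add_mul_le_pow (R := ℝ) (a := q * (k + 1) - 1)
      (by have : 0 ≤ q * ((k:ℝ) + 1) := by positivity
          linarith) ρ
    rw [add_sub_cancel, mul_pow] at hb
    have hq : (q⁻¹) ^ ρ * q ^ ρ = 1 := by rw [← mul_pow, inv_mul_cancel₀ h0.ne', one_pow]
    have : ((k:ℝ) + 1) ^ ρ = (q⁻¹) ^ ρ * (q ^ ρ * ((k:ℝ) + 1) ^ ρ) := by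
      rw [← mul_assoc, hq, one_mul]
    rw [this]
    have h4 := mul_le_mul_of_nonneg_left hb
      (show 0 ≤ (q⁻¹) ^ ρ * ((1 - q) ^ k * q) by positivity)
    calc _ = (q⁻¹) ^ ρ * ((1 - q) ^ k * q) * (1 + ρ * (q * (k + 1) - 1)) := by ring
      _ ≤ _ := h4
      _ = _ := by ring
  · refine (hasSum_le hub hsum.hasSum hsub).trans (le_of_eq ?_)
    rw [sub_sub_cancel, pow_succ, inv_pow]
    field_simp

lemma ball_le_one {𝒳 𝒳' : Type*} [Fintype 𝒳'] (Q : 𝒳' → ℝ) (hQ : ∀ b, 0 < Q b)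
    (hQ1 : ∑ b, Q b = 1) (d : 𝒳 → 𝒳' → ℝ) (Δ : ℝ) {n : ℕ} (x : Fin n → 𝒳) :
    ballProbN Q d Δ x ≤ 1 := by
  rw [← sum_prod_one (fun (_ : Fin n) => Q) (fun _ => hQ1)]
  refine Finset.sum_le_sum fun y _ => ?_
  have : 0 ≤ ∏ i, Q (y i) := Finset.prod_nonneg fun i _ => (hQ _).le
  split_ifs
  · exact le_rfl
  · exact this

lemma ball_pos {𝒳 𝒳' : Type*} [Fintype 𝒳'] (Q : 𝒳' → ℝ) (hQ : ∀ b, 0 < Q b)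
    (d : 𝒳 → 𝒳' → ℝ) (Δ : ℝ) (ys : 𝒳 → 𝒳') (hys : ∀ a, d a (ys a) ≤ Δ)
    {n : ℕ} (x : Fin n → 𝒳) :
    0 < ballProbN Q d Δ x := by
  have hp : ∀ y : Fin n → 𝒳', 0 < ∏ i, Q (y i) := fun y => Finset.prod_pos fun i _ => (hQ _)
  refine lt_of_lt_of_le (hp fun i => ys (x i)) ?_
  unfold ballProbN
  have := Finset.single_le_sum (f := fun y : Fin n → 𝒳' =>
    if (∑ i, d (x i) (y i)) ≤ n * Δ then ∏ i, Q (y i) else 0) (s := Finset.univ)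
    (fun y _ => by split_ifs; exacts [(hp y).le, le_rfl])
    (Finset.mem_univ (fun i => ys (x i)))
  refine le_trans (le_of_eq ?_) this
  have h : ∑ i, d (x i) (ys (x i)) ≤ n * Δ :=
    (Finset.sum_le_sum fun i _ => hys (x i)).trans (by simp)
  simp [h]

/-- one-shot converse -/
lemma ball_avg {𝒳 𝒳' : Type*} [Fintype 𝒳] [Fintype 𝒳'] (Q : 𝒳' → ℝ) (hQ : ∀ b, 0 < Q b)
    (hQ1 : ∑ b, Q b = 1) (d : 𝒳 → 𝒳' → ℝ) (Δ : ℝ) (ys : 𝒳 → 𝒳') (hys : ∀ a, d a (ys a) ≤ Δ)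
    (QX : 𝒳 → ℝ) (h0 : ∀ a, 0 ≤ QX a) (h1 : ∑ a, QX a = 1) (n : ℕ) (hn : 0 < n) :
    n * Rfun QX Q d Δ ≤ ∑ x : Fin n → 𝒳, (∏ i, QX (x i)) * -Real.log (ballProbN Q d Δ x) := by
  classical
  have hn' : (0:ℝ) < n := by exact_mod_cast hn
  have hqpos := fun x : Fin n → 𝒳 => ball_pos Q hQ d Δ ys hys x
  -- conditional law
  set W : (Fin n → 𝒳) → (Fin n → 𝒳') → ℝ := fun x y =>
    (if (∑ i, d (x i) (y i)) ≤ n * Δ then ∏ i, Q (y i) else 0) / ballProbN Q d Δ x with hW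
  have hpQ : ∀ y : Fin n → 𝒳', 0 < ∏ i, Q (y i) := fun y => Finset.prod_pos fun i _ => (hQ _)
  have hpX : ∀ x : Fin n → 𝒳, 0 ≤ ∏ i, QX (x i) := fun y => Finset.prod_nonneg fun i _ => (h0 _)
  have hW0 : ∀ x y, 0 ≤ W x y := fun x y => by
    refine div_nonneg ?_ (hqpos x).le
    split_ifs; exacts [(hpQ y).le, le_rfl]
  have hW1 : ∀ x, ∑ y, W x y = 1 := fun x => by
    rw [hW]; simp only
    rw [← Finset.sum_div]
    exact div_self (hqpos x).ne'
  set J : 𝒳 → 𝒳' → ℝ := fun a b => (1 / (n:ℝ)) * ∑ x : Fin n → 𝒳, ∑ y : Fin n → 𝒳',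
    (∏ i, QX (x i)) * W x y * ∑ i, (if x i = a then (1:ℝ) else 0) * (if y i = b then 1 else 0) with hJ
  have hJ0 : ∀ a b, 0 ≤ J a b := fun a b => by
    rw [hJ]
    refine mul_nonneg (by positivity) (Finset.sum_nonneg fun x _ => Finset.sum_nonneg fun y _ =>
      mul_nonneg (mul_nonneg (hpX x) (hW0 x y)) (Finset.sum_nonneg fun i _ => ?_))
    split_ifs <;> norm_num
  have hJh : ∀ h : 𝒳 → 𝒳' → ℝ, ∑ a, ∑ b, J a b * h a b =
      (1 / (n:ℝ)) * ∑ x : Fin n → 𝒳, (∏ i, QX (x i)) * ∑ y, W x y * ∑ i, h (x i) (y i) := by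
    intro h
    have key : ∀ (x : Fin n → 𝒳) (y : Fin n → 𝒳'), ∑ a, ∑ b,
        (∑ i, (if x i = a then (1:ℝ) else 0) * (if y i = b then 1 else 0)) * h a b
        = ∑ i, h (x i) (y i) := by
      intro x y
      simp_rw [Finset.sum_mul]
      rw [Finset.sum_congr rfl fun a _ => Finset.sum_comm, Finset.sum_comm]
      refine Finset.sum_congr rfl fun i _ => ?_
      simp
    simp_rw [← key, hJ, Finset.mul_sum, Finset.sum_mul, Finset.mul_sum]
    rw [Finset.sum_congr rfl fun a _ => Finset.sum_comm, Finset.sum_comm]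
    refine Finset.sum_congr rfl fun x _ => ?_
    rw [Finset.sum_congr rfl fun a _ => Finset.sum_comm, Finset.sum_comm]
    refine Finset.sum_congr rfl fun y _ => Finset.sum_congr rfl fun a _ =>
      Finset.sum_congr rfl fun b _ => Finset.sum_congr rfl fun i _ => ?_
    ring
  have hJm : ∀ a, ∑ b, J a b = QX a := by
    intro a
    have := hJh (fun a' _ => if a' = a then 1 else 0)
    simp only [mul_ite, mul_one, mul_zero] at this
    rw [Finset.sum_eq_single a (by intro b _ hb; simp [hb]) (by simp)] at this
    simp only [if_true] at this
    rw [this]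
    simp_rw [← Finset.sum_mul, hW1, one_mul]
    rw [sum_prod_sum (fun _ => QX) (fun _ => h1) (fun _ c => if c = a then (1:ℝ) else 0)]
    simp
    field_simp
  set V : 𝒳 → 𝒳' → ℝ := fun a b => if QX a = 0 then (if b = ys a then 1 else 0)
    else J a b / QX a with hVdef
  have hV : IsChannel V := by
    constructor
    · intro a b
      simp only [hVdef]
      split_ifs
      · norm_num
      · norm_num
      · exact div_nonneg (hJ0 a b) (h0 a)
    · intro a
      simp only [hVdef]
      split_ifs with h
      · simp
      · rw [← Finset.sum_div, hJm, div_self h]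
  have hVJ : ∀ a b, QX a * V a b = J a b := by
    intro a b
    simp only [hVdef]
    split_ifs with h h'
    all_goals try field_simp
    all_goals
      have := (Finset.sum_eq_zero_iff_of_nonneg (fun b _ => hJ0 a b)).1 ((hJm a).trans h) b
        (Finset.mem_univ b)
      simp [this, h]
  have hsumW : ∑ x : Fin n → 𝒳, (∏ i, QX (x i)) = 1 := sum_prod_one (fun _ => QX) (fun _ => h1)
  have hdist : (∑ x, ∑ y, QX x * V x y * d x y) ≤ Δ := by
    simp_rw [hVJ]
    rw [hJh]
    have : ∑ x : Fin n → 𝒳, (∏ i, QX (x i)) * ∑ y, W x y * ∑ i, d (x i) (y i) ≤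
        ∑ x : Fin n → 𝒳, (∏ i, QX (x i)) * (n * Δ) := by
      refine Finset.sum_le_sum fun x _ => mul_le_mul_of_nonneg_left ?_ (hpX x)
      rw [← one_mul (n * Δ), ← hW1 x, Finset.sum_mul]
      refine Finset.sum_le_sum fun y _ => ?_
      by_cases h : ∑ i, d (x i) (y i) ≤ n * Δ
      · exact mul_le_mul_of_nonneg_left h (hW0 x y)
      · simp [hW, h]
    rw [← Finset.sum_mul, hsumW, one_mul] at this
    rw [one_div, inv_mul_le_iff₀ hn']
    exact this
  have hR := R_le QX h0 Q hQ hQ1 d Δ V hV hdist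
  simp_rw [hVJ] at hR
  rw [hJh (fun a b => Real.log (V a b) - Real.log (Q b)), one_div, ← div_eq_inv_mul,
    le_div_iff₀ hn', mul_comm] at hR
  refine hR.trans (Finset.sum_le_sum fun x _ => ?_)
  rcases (hpX x).eq_or_lt with hx | hx
  · rw [← hx]; simp
  refine mul_le_mul_of_nonneg_left ?_ (hpX x)
  have hq := hqpos x
  set q := ballProbN Q d Δ x with hqdef
  have step : ∀ y, W x y * ((∑ i, (Real.log (V (x i) (y i)) - Real.log (Q (y i)))) + Real.log q)
      ≤ ∏ i, V (x i) (y i) - W x y := by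
    intro y
    have hpV : 0 ≤ ∏ i, V (x i) (y i) := Finset.prod_nonneg fun i _ => hV.1 _ _
    rcases (hW0 x y).eq_or_lt with h | h
    · rw [← h]; simpa using hpV
    · have hVpos : ∀ i, 0 < V (x i) (y i) := by
        intro i
        have hJp : 0 < J (x i) (y i) := by
          rw [hJ]
          refine mul_pos (by positivity) ?_
          have hnn : ∀ (x' : Fin n → 𝒳) (y' : Fin n → 𝒳'), 0 ≤ (∏ i, QX (x' i)) * W x' y' *
              ∑ j, (if x' j = x i then (1:ℝ) else 0) * (if y' j = y i then 1 else 0) :=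
            fun x' y' => mul_nonneg (mul_nonneg (hpX x') (hW0 x' y'))
              (Finset.sum_nonneg fun j _ => by split_ifs <;> norm_num)
          refine Finset.sum_pos' (fun x' _ => Finset.sum_nonneg fun y' _ => hnn x' y')
            ⟨x, Finset.mem_univ x, ?_⟩
          refine Finset.sum_pos' (fun y' _ => hnn x y') ⟨y, Finset.mem_univ y, ?_⟩
          refine mul_pos (mul_pos hx h) (Finset.sum_pos' (fun j _ => by split_ifs <;> norm_num)
            ⟨i, Finset.mem_univ i, by simp⟩)
        rw [← hVJ] at hJp
        exact pos_of_mul_pos_right hJp (h0 _)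
      have hWy : W x y = (∏ i, Q (y i)) / q := by
        by_cases h' : ∑ i, d (x i) (y i) ≤ n * Δ
        · simp [hW, h']; rfl
        · simp [hW, h'] at h
      have hPV : 0 < ∏ i, V (x i) (y i) := Finset.prod_pos fun i _ => hVpos i
      have hlog : (∑ i, (Real.log (V (x i) (y i)) - Real.log (Q (y i)))) + Real.log q
          = Real.log ((∏ i, V (x i) (y i)) / W x y) := by
        rw [Real.log_div hPV.ne' h.ne', hWy, Real.log_div (hpQ y).ne' hq.ne',
          Real.log_prod (fun i _ => (hVpos i).ne'), Real.log_prod (fun i _ => (hQ _).ne'),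
          Finset.sum_sub_distrib]
        ring
      rw [hlog]
      have := mul_le_mul_of_nonneg_left (Real.log_le_sub_one_of_pos (div_pos hPV h)) h.le
      refine this.trans (le_of_eq ?_)
      field_simp
  have hs := Finset.sum_le_sum fun y (_ : y ∈ Finset.univ) => step y
  simp_rw [mul_add] at hs
  rw [Finset.sum_add_distrib, ← Finset.sum_mul, hW1, Finset.sum_sub_distrib, hW1,
    sum_prod_one (fun i => V (x i)) (fun i => hV.2 _)] at hs
  linarith

lemma exp_quad (u : ℝ) (hu : u ≤ 1) : Real.exp u ≤ 1 + u + u ^ 2 := by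
  by_cases h : -1 ≤ u
  · have := Real.abs_exp_sub_one_sub_id_le (abs_le.2 ⟨h, hu⟩)
    linarith [(abs_le.1 this).2]
  · have h2 : Real.exp u ≤ 1 := Real.exp_le_one_iff.2 (by linarith)
    nlinarith

lemma mul_log_sq (v : ℝ) (h0 : 0 ≤ v) (h1 : v ≤ 1) : v * Real.log v ^ 2 ≤ 4 := by
  rcases h0.eq_or_lt with h | h
  · rw [← h]; simp
  · have hs : 0 < Real.sqrt v := Real.sqrt_pos.2 h
    have h2 := Real.abs_log_mul_self_lt (Real.sqrt v) hs (Real.sqrt_le_one.2 h1)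
    rw [Real.log_sqrt h0] at h2
    have h3 : (Real.log v / 2 * Real.sqrt v) ^ 2 ≤ 1 := by
      rw [← sq_abs]; exact pow_le_one₀ (abs_nonneg _) h2.le
    rw [mul_pow, Real.sq_sqrt h0] at h3
    nlinarith

lemma mgf_bound {κ : Type*} [Fintype κ] (v Q : κ → ℝ) (hv : ∀ b, 0 ≤ v b) (hQ : ∀ b, 0 < Q b)
    (hs : ∑ b, v b = 1) (hQ1 : ∑ b, Q b = 1) (L : ℝ) (hL : L = ∑ b, -Real.log (Q b))
    (t : ℝ) (ht : 0 < t) (htL : t * L ≤ 1) :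
    ∑ b, v b * Real.exp (t * (Real.log (v b) - Real.log (Q b))) ≤
      Real.exp (t * ∑ b, v b * (Real.log (v b) - Real.log (Q b)) +
        t ^ 2 * (Fintype.card κ * (8 + 2 * L ^ 2))) := by
  have hv1 : ∀ b, v b ≤ 1 := fun b =>
    hs ▸ Finset.single_le_sum (fun x _ => (hv x)) (Finset.mem_univ b)
  have hb : ∀ b, v b * Real.exp (t * (Real.log (v b) - Real.log (Q b))) ≤
      v b + t * (v b * (Real.log (v b) - Real.log (Q b))) + t ^ 2 * (8 + 2 * L ^ 2) := by
    intro b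
    obtain ⟨hq0, hqL⟩ := neglog_le Q hQ hQ1 b
    rw [← hL] at hqL
    have hlv : Real.log (v b) ≤ 0 := Real.log_nonpos (hv b) (hv1 b)
    have hu : t * (Real.log (v b) - Real.log (Q b)) ≤ 1 :=
      (mul_le_mul_of_nonneg_left (by linarith) ht.le).trans htL
    have h1 := mul_le_mul_of_nonneg_left (exp_quad _ hu) (hv b)
    have h2 : v b * (Real.log (v b) - Real.log (Q b)) ^ 2 ≤ 8 + 2 * L ^ 2 := by
      have e1 := mul_log_sq (v b) (hv b) (hv1 b)
      have e2 : v b * Real.log (Q b) ^ 2 ≤ L ^ 2 := by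
        have : Real.log (Q b) ^ 2 ≤ L ^ 2 := by
          rw [← neg_sq]; exact pow_le_pow_left₀ hq0 hqL 2
        calc _ ≤ 1 * Real.log (Q b) ^ 2 := mul_le_mul_of_nonneg_right (hv1 b) (sq_nonneg _)
          _ ≤ _ := by linarith
      have e3 : (Real.log (v b) - Real.log (Q b)) ^ 2 ≤
          2 * Real.log (v b) ^ 2 + 2 * Real.log (Q b) ^ 2 := by
        nlinarith [sq_nonneg (Real.log (v b) + Real.log (Q b))]
      have := mul_le_mul_of_nonneg_left e3 (hv b)
      linarith
    have h3 := mul_le_mul_of_nonneg_left h2 (sq_nonneg t)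
    nlinarith
  refine (Finset.sum_le_sum fun b _ => hb b).trans ?_
  rw [Finset.sum_add_distrib, Finset.sum_add_distrib, hs, ← Finset.mul_sum]
  simp only [Finset.sum_const, nsmul_eq_mul, Finset.card_univ]
  refine le_trans (le_of_eq ?_) (Real.add_one_le_exp _)
  ring

set_option maxHeartbeats 1600000 in
/-- achievability: lower bound on ball probability -/
lemma ball_lower {𝒳 𝒳' : Type*} [Fintype 𝒳'] (Q : 𝒳' → ℝ) (hQ : ∀ b, 0 < Q b)
    (hQ1 : ∑ b, Q b = 1) (d : 𝒳 → 𝒳' → ℝ) (Δ : ℝ) (ys : 𝒳 → 𝒳') (hys : ∀ a, d a (ys a) ≤ Δ)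
    (hmin : ∀ a b, d a (ys a) ≤ d a b) (ε : ℝ) (hε : 0 < ε) :
    ∃ c : ℝ, 0 < c ∧ ∃ N : ℕ, ∀ n : ℕ, N ≤ n → ∀ (x : Fin n → 𝒳) (V : 𝒳 → 𝒳' → ℝ),
      IsChannel V → ∑ i, ∑ b, V (x i) b * d (x i) b ≤ n * Δ →
      c * Real.exp (-(∑ i, ∑ b, V (x i) b * (Real.log (V (x i) b) - Real.log (Q b))) - n * ε)
        ≤ ballProbN Q d Δ x := by
  classical
  set L : ℝ := ∑ b, -Real.log (Q b) with hL
  have hL0 : 0 ≤ L := Finset.sum_nonneg fun b _ => (neglog_le Q hQ hQ1 b).1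
  set C : ℝ := Fintype.card 𝒳' * (8 + 2 * L ^ 2) with hC
  have hC0 : 0 ≤ C := by positivity
  obtain ⟨δ, hδ0, hδ1, hδL⟩ : ∃ δ : ℝ, 0 < δ ∧ δ < 1 ∧ δ * L ≤ ε / 2 := by
    refine ⟨min (1/2) (ε / 2 / (L + 1)), by positivity, ?_, ?_⟩
    · exact lt_of_le_of_lt (min_le_left _ _) (by norm_num)
    · calc _ ≤ ε / 2 / (L + 1) * L := mul_le_mul_of_nonneg_right (min_le_right _ _) hL0
        _ ≤ ε / 2 / (L + 1) * (L + 1) := mul_le_mul_of_nonneg_left (by linarith) (by positivity)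
        _ = ε / 2 := by field_simp
  obtain ⟨t, ht0, htL, htC⟩ : ∃ t : ℝ, 0 < t ∧ t * L ≤ 1 ∧ t * C ≤ ε / 4 := by
    refine ⟨min (1 / (L + 1)) (ε / 4 / (C + 1)), by positivity, ?_, ?_⟩
    · calc _ ≤ 1 / (L + 1) * L := mul_le_mul_of_nonneg_right (min_le_left _ _) hL0
        _ ≤ 1 / (L + 1) * (L + 1) := mul_le_mul_of_nonneg_left (by linarith) (by positivity)
        _ = 1 := by field_simp
    · calc _ ≤ ε / 4 / (C + 1) * C := mul_le_mul_of_nonneg_right (min_le_right _ _) hC0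
        _ ≤ ε / 4 / (C + 1) * (C + 1) := mul_le_mul_of_nonneg_left (by linarith) (by positivity)
        _ = ε / 4 := by field_simp
  obtain ⟨N, hN⟩ : ∃ N : ℕ, ∀ n : ℕ, N ≤ n → Real.exp (-(n * (t * ε / 4))) ≤ δ / 2 := by
    have : Filter.Tendsto (fun n : ℕ => Real.exp (-(n * (t * ε / 4)))) Filter.atTop (nhds 0) := by
      refine Real.tendsto_exp_neg_atTop_nhds_zero.comp ?_
      exact Filter.Tendsto.atTop_mul_const (by positivity) tendsto_natCast_atTop_atTop
    obtain ⟨N, hN⟩ := Filter.eventually_atTop.1 (this.eventually (ge_mem_nhds (half_pos hδ0)))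
    exact ⟨N, hN⟩
  refine ⟨δ / 2, by positivity, N, fun n hn x V hV hVd => ?_⟩
  set V' : 𝒳 → 𝒳' → ℝ := fun a b => (1 - δ) * V a b + δ * (if b = ys a then 1 else 0) with hV'
  have hV'c : IsChannel V' := by
    constructor
    · intro a b
      have := hV.1 a b
      have h2 : 0 ≤ 1 - δ := by linarith
      simp only [hV']
      split_ifs <;> positivity
    · intro a
      simp only [hV']
      rw [Finset.sum_add_distrib, ← Finset.mul_sum, ← Finset.mul_sum, hV.2]
      simp
  -- exponents
  have hobj : ∀ a, ∑ b, V' a b * (Real.log (V' a b) - Real.log (Q b)) ≤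
      ∑ b, V a b * (Real.log (V a b) - Real.log (Q b)) + ε / 2 := by
    intro a
    have h1 : ∀ b, V' a b * (Real.log (V' a b) - Real.log (Q b)) ≤
        (1 - δ) * (V a b * (Real.log (V a b) - Real.log (Q b))) +
          δ * (if b = ys a then -Real.log (Q b) else 0) := by
      intro b
      have hcv := Real.convexOn_mul_log.2 
        (show V a b ∈ Set.Ici (0:ℝ) from hV.1 a b)
        (show (if b = ys a then (1:ℝ) else 0) ∈ Set.Ici (0:ℝ) by
          simp only [Set.mem_Ici]; split_ifs <;> norm_num)
        (show 0 ≤ 1 - δ by linarith) hδ0.le (by ring)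
      simp only [smul_eq_mul] at hcv
      have e : V' a b = (1 - δ) * V a b + δ * (if b = ys a then 1 else 0) := rfl
      rw [← e] at hcv
      have : (if b = ys a then (1:ℝ) else 0) * Real.log (if b = ys a then 1 else 0) = 0 := by
        split_ifs <;> simp
      rw [this] at hcv
      have e2 : V' a b * Real.log (Q b) = (1 - δ) * (V a b * Real.log (Q b)) +
          δ * (if b = ys a then Real.log (Q b) else 0) := by
        rw [e]; split_ifs <;> ring
      rw [mul_sub, e2]
      split_ifs at * <;> linarith
    refine (Finset.sum_le_sum fun b _ => h1 b).trans ?_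
    rw [Finset.sum_add_distrib, ← Finset.mul_sum, ← Finset.mul_sum]
    simp only [Finset.sum_ite_eq', Finset.mem_univ, if_true]
    have hg := gibbs _ _ (hV.1 a) hQ (hV.2 a) hQ1
    have hq := mul_le_mul_of_nonneg_left (neglog_le Q hQ hQ1 (ys a)).2 hδ0.le
    have := mul_nonneg hδ0.le hg
    linarith
  set E' : ℝ := ∑ i, ∑ b, V' (x i) b * (Real.log (V' (x i) b) - Real.log (Q b)) with hE'
  set E : ℝ := ∑ i, ∑ b, V (x i) b * (Real.log (V (x i) b) - Real.log (Q b)) with hE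
  have hEE : E' ≤ E + n * (ε / 2) := by
    rw [hE', hE]
    refine (Finset.sum_le_sum fun i _ => hobj (x i)).trans (le_of_eq ?_)
    rw [Finset.sum_add_distrib]; simp
  set K : ℝ := E' + n * (ε / 2) with hK
  set F : (Fin n → 𝒳') → ℝ := fun y =>
    ∑ i, (Real.log (V' (x i) (y i)) - Real.log (Q (y i))) with hF
  set G : (Fin n → 𝒳') → ℝ := fun y => ∑ i, (d (x i) (y i) - d (x i) (ys (x i))) with hG
  set m : ℝ := n * Δ - ∑ i, d (x i) (ys (x i)) with hm
  set p : (Fin n → 𝒳') → ℝ := fun y => ∏ i, V' (x i) (y i) with hp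
  have hp0 : ∀ y, 0 ≤ p y := fun y => Finset.prod_nonneg fun i _ => hV'c.1 _ _
  have hp1 : ∑ y, p y = 1 := sum_prod_one (fun i => V' (x i)) (fun i => hV'c.2 _)
  have hG0 : ∀ y, 0 ≤ G y := fun y => Finset.sum_nonneg fun i _ => sub_nonneg.2 (hmin _ _)
  have hm0 : 0 ≤ m := by
    rw [hm, sub_nonneg]
    exact (Finset.sum_le_sum fun i _ => hys (x i)).trans (by simp)
  have hGA : ∀ y, G y ≤ m ↔ ∑ i, d (x i) (y i) ≤ n * Δ := by
    intro y
    simp only [hG, hm, Finset.sum_sub_distrib]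
    constructor <;> intro h <;> linarith
  -- Markov
  have hEG : ∑ y, p y * G y ≤ (1 - δ) * m := by
    rw [hp, hG]
    simp only
    rw [sum_prod_sum (fun i => V' (x i)) (fun i => hV'c.2 _)
      (fun i b => d (x i) b - d (x i) (ys (x i)))]
    have : ∀ i, ∑ b, V' (x i) b * (d (x i) b - d (x i) (ys (x i))) =
        (1 - δ) * (∑ b, V (x i) b * d (x i) b - d (x i) (ys (x i))) := by
      intro i
      have e : ∀ b, V' (x i) b * (d (x i) b - d (x i) (ys (x i))) =
        (1 - δ) * (V (x i) b * d (x i) b - V (x i) b * d (x i) (ys (x i))) := by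
        intro b
        simp only [hV']
        split_ifs with h
        · rw [h]; ring
        · ring
      simp_rw [e]
      rw [← Finset.mul_sum, Finset.sum_sub_distrib, ← Finset.sum_mul, hV.2, one_mul]
    simp_rw [this]
    rw [← Finset.mul_sum, Finset.sum_sub_distrib]
    exact mul_le_mul_of_nonneg_left (by rw [hm]; linarith) (by linarith)
  have hMarkov : ∑ y, p y * (if G y ≤ m then 0 else 1) ≤ 1 - δ := by
    rcases hm0.eq_or_lt with h | h
    · rw [← h, mul_zero] at hEG
      have hz := (Finset.sum_eq_zero_iff_of_nonneg
        (fun y _ => mul_nonneg (hp0 y) (hG0 y))).1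
        (le_antisymm hEG (Finset.sum_nonneg fun y _ => mul_nonneg (hp0 y) (hG0 y)))
      rw [Finset.sum_eq_zero]
      · linarith
      · intro y hy
        rcases mul_eq_zero.1 (hz y hy) with h' | h'
        · rw [h', zero_mul]
        · rw [h', if_pos hm0, mul_zero]
    · have : m * ∑ y, p y * (if G y ≤ m then 0 else 1) ≤ m * (1 - δ) := by
        rw [mul_comm m (1 - δ)]
        refine le_trans ?_ hEG
        rw [Finset.mul_sum]
        refine Finset.sum_le_sum fun y _ => ?_
        split_ifs with h'
        · simpa using mul_nonneg (hp0 y) (hG0 y)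
        · rw [mul_one, mul_comm]
          exact mul_le_mul_of_nonneg_left (not_le.1 h').le (hp0 y)
      exact le_of_mul_le_mul_left this h
  -- Chernoff
  have hCh : ∑ y, p y * Real.exp (t * (F y - K)) ≤ δ / 2 := by
    have e : ∀ y, p y * Real.exp (t * (F y - K)) = (∏ i, (fun i b => V' (x i) b *
        Real.exp (t * (Real.log (V' (x i) b) - Real.log (Q b)))) i (y i)) * Real.exp (-(t * K)) := by
      intro y
      rw [Finset.prod_mul_distrib, ← Real.exp_sum, mul_assoc, ← Real.exp_add, ← Finset.mul_sum]
      congr 2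
      simp only [hF]; ring
    rw [Finset.sum_congr rfl fun y _ => e y, ← Finset.sum_mul, sum_prod_eq (fun i b => V' (x i) b *
        Real.exp (t * (Real.log (V' (x i) b) - Real.log (Q b))))]
    have h1 : ∏ i, ∑ b, V' (x i) b * Real.exp (t * (Real.log (V' (x i) b) - Real.log (Q b)))
        ≤ ∏ i, Real.exp (t * ∑ b, V' (x i) b * (Real.log (V' (x i) b) - Real.log (Q b)) +
          t ^ 2 * C) := by
      refine Finset.prod_le_prod (fun i _ => Finset.sum_nonneg fun b _ =>
        mul_nonneg (hV'c.1 _ _) (Real.exp_pos _).le) fun i _ => ?_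
      exact mgf_bound _ Q (hV'c.1 _) hQ (hV'c.2 _) hQ1 L hL t ht0 htL
    refine (mul_le_mul_of_nonneg_right h1 (Real.exp_pos _).le).trans ?_
    rw [← Real.exp_sum, ← Real.exp_add, Finset.sum_add_distrib, ← Finset.mul_sum]
    refine le_trans (Real.exp_le_exp.2 ?_) (hN n hn)
    simp only [Finset.sum_const, Finset.card_univ, Fintype.card_fin, nsmul_eq_mul]
    rw [← hE', hK]
    have : (n * t) * (t * C) ≤ (n * t) * (ε / 4) :=
      mul_le_mul_of_nonneg_left htC (by positivity)
    nlinarith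
  have hpt : ∀ y, Real.exp (-K) * (p y - p y * (if G y ≤ m then 0 else 1)
      - p y * Real.exp (t * (F y - K))) ≤
      if (∑ i, d (x i) (y i)) ≤ n * Δ then ∏ i, Q (y i) else 0 := by
    intro y
    have hq0 : 0 < ∏ i, Q (y i) := Finset.prod_pos fun i _ => hQ _
    have hex := Real.exp_pos (t * (F y - K))
    by_cases hA : ∑ i, d (x i) (y i) ≤ n * Δ
    · rw [if_pos hA, if_pos ((hGA y).2 hA)]
      rcases (hp0 y).eq_or_lt with h | h
      · rw [← h]; simpa using hq0.le
      · by_cases hFK : K ≤ F y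
        · have : 1 ≤ Real.exp (t * (F y - K)) :=
            Real.one_le_exp (mul_nonneg ht0.le (by linarith))
          refine le_trans ?_ hq0.le
          refine mul_nonpos_of_nonneg_of_nonpos (Real.exp_pos _).le ?_
          nlinarith
        · have hVi : ∀ i, V' (x i) (y i) ≠ 0 := fun i =>
            (Finset.prod_ne_zero_iff.1 h.ne') i (Finset.mem_univ i)
          have hpF : Real.exp (-F y) * p y = ∏ i, Q (y i) := by
            have : F y = Real.log (p y) - Real.log (∏ i, Q (y i)) := by
              simp only [hp, hF]
              rw [Real.log_prod (fun i _ => hVi i), Real.log_prod (fun i _ => (hQ _).ne'),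
                Finset.sum_sub_distrib]
            rw [this, neg_sub, Real.exp_sub, Real.exp_log h, Real.exp_log hq0]
            field_simp
          rw [← hpF]
          refine mul_le_mul (Real.exp_le_exp.2 (by linarith)) ?_ ?_ (Real.exp_pos _).le
          · nlinarith
          · have : Real.exp (t * (F y - K)) ≤ 1 := Real.exp_le_one_iff.2
              (mul_nonpos_of_nonneg_of_nonpos ht0.le (by linarith))
            nlinarith
    · rw [if_neg hA, if_neg (fun h => hA ((hGA y).1 h))]
      refine mul_nonpos_of_nonneg_of_nonpos (Real.exp_pos _).le ?_
      nlinarith [hp0 y, mul_nonneg (hp0 y) hex.le]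
  have hfin := Finset.sum_le_sum fun y (_ : y ∈ Finset.univ) => hpt y
  rw [← Finset.mul_sum, Finset.sum_sub_distrib, Finset.sum_sub_distrib, hp1] at hfin
  refine le_trans ?_ hfin
  rw [mul_comm]
  refine mul_le_mul (Real.exp_le_exp.2 ?_) (by linarith) (by positivity) (Real.exp_pos _).le
  rw [hK]; linarith

/-- empirical distribution -/
noncomputable def emp {𝒳 : Type*} [DecidableEq 𝒳] {n : ℕ} (x : Fin n → 𝒳) (a : 𝒳) : ℝ :=
  ((Finset.univ.filter fun i => x i = a).card : ℝ) / n

section emp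
variable {𝒳 : Type*} [Fintype 𝒳] [DecidableEq 𝒳] {n : ℕ} (x : Fin n → 𝒳)

lemma emp_sum (h : 𝒳 → ℝ) : ∑ a, emp x a * h a = (∑ i, h (x i)) / n := by
  unfold emp
  simp_rw [div_mul_eq_mul_div]
  rw [← Finset.sum_div]
  congr 1
  simp_rw [Finset.card_filter, Nat.cast_sum, Finset.sum_mul]
  rw [Finset.sum_comm]
  refine Finset.sum_congr rfl fun i _ => ?_
  simp

lemma emp_nonneg (a : 𝒳) : 0 ≤ emp x a := by unfold emp; positivity

lemma emp_one (hn : 0 < n) : ∑ a, emp x a = 1 := by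
  have := emp_sum x (fun _ => 1)
  have hn' : (n:ℝ) ≠ 0 := by exact_mod_cast hn.ne'
  simpa [hn'] using this

lemma emp_pos (i : Fin n) : 0 < emp x (x i) := by
  unfold emp
  have hn : 0 < n := i.pos
  have : 0 < (Finset.univ.filter fun j => x j = x i).card :=
    Finset.card_pos.2 ⟨i, by simp⟩
  positivity

lemma emp_ac (P : 𝒳 → ℝ) (hP : ∏ i, P (x i) ≠ 0) (a : 𝒳) (ha : P a = 0) : emp x a = 0 := by
  unfold emp
  rw [Finset.filter_eq_empty_iff.2]
  · simp
  · intro i _ h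
    exact (Finset.prod_ne_zero_iff.1 hP) i (Finset.mem_univ i) (h ▸ ha)

lemma emp_prob (P : 𝒳 → ℝ) (hP0 : ∀ a, 0 ≤ P a) (hP : ∏ i, P (x i) ≠ 0) (hn : 0 < n) :
    ∏ i, P (x i) = (∏ i, emp x (x i)) * Real.exp (-(n * klDivR (emp x) P)) := by
  have hn' : (n:ℝ) ≠ 0 := by exact_mod_cast hn.ne'
  have hPi : ∀ i, 0 < P (x i) := fun i => lt_of_le_of_ne (hP0 _)
    (Ne.symm ((Finset.prod_ne_zero_iff.1 hP) i (Finset.mem_univ i)))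
  have e : klDivR (emp x) P = ∑ a, emp x a * Real.log (emp x a / P a) := by
    unfold klDivR
    refine Finset.sum_congr rfl fun a _ => ?_
    split_ifs with h
    · rw [h, zero_mul]
    · rfl
  rw [e, emp_sum x (fun a => Real.log (emp x a / P a)), mul_div_cancel₀ _ hn',
    ← Finset.sum_neg_distrib, Real.exp_sum, ← Finset.prod_mul_distrib]
  refine Finset.prod_congr rfl fun i _ => ?_
  have h1 := emp_pos x i
  rw [← Real.log_inv, Real.exp_log (inv_pos.2 (div_pos h1 (hPi i)))]
  field_simp

end emp

lemma emp_count {𝒳 : Type*} [Fintype 𝒳] [DecidableEq 𝒳] (n : ℕ) (hn : 0 < n) :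
    ∑ x : Fin n → 𝒳, ∏ i, emp x (x i) ≤ ((n : ℝ) + 1) ^ Fintype.card 𝒳 := by
  have hn' : (n:ℝ) ≠ 0 := by exact_mod_cast hn.ne'
  set S : Finset (𝒳 → Fin (n + 1)) := Finset.univ.filter
    fun c => ∑ a, ((c a : ℕ) : ℝ) / n = 1 with hS
  have h1 : ∀ x : Fin n → 𝒳, ∏ i, emp x (x i) ≤ ∑ c ∈ S, ∏ i, ((c (x i) : ℕ) : ℝ) / n := by
    intro x
    have hlt : ∀ a, (Finset.univ.filter fun i => x i = a).card < n + 1 := fun a =>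
      Nat.lt_succ_of_le ((Finset.card_le_univ _).trans (by simp))
    have := Finset.single_le_sum (s := S) (f := fun c : 𝒳 → Fin (n + 1) =>
      ∏ i, ((c (x i) : ℕ) : ℝ) / n) (fun c _ => Finset.prod_nonneg fun i _ => by positivity)
      (a := fun a => ⟨_, hlt a⟩) (by
        rw [hS, Finset.mem_filter]
        exact ⟨Finset.mem_univ _, emp_one x hn⟩)
    exact this
  refine (Finset.sum_le_sum fun x _ => h1 x).trans ?_
  rw [Finset.sum_comm]
  have h2 : ∀ c ∈ S, ∑ x : Fin n → 𝒳, ∏ i, ((c (x i) : ℕ) : ℝ) / n = 1 := by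
    intro c hc
    exact sum_prod_one (fun _ a => ((c a : ℕ) : ℝ) / n) (fun _ => (Finset.mem_filter.1 hc).2)
  rw [Finset.sum_congr rfl h2]
  simp only [Finset.sum_const, nsmul_eq_mul, mul_one]
  have : S.card ≤ (n + 1) ^ Fintype.card 𝒳 := (Finset.card_le_univ _).trans (by simp)
  exact_mod_cast this

/-- lower bound on the moment -/
lemma moment_lower {𝒳 𝒳' : Type*} [Fintype 𝒳] [Fintype 𝒳'] (P : 𝒳 → ℝ) (hP0 : ∀ x, 0 ≤ P x)
    (Q : 𝒳' → ℝ) (hQ : ∀ b, 0 < Q b)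
    (hQ1 : ∑ b, Q b = 1) (d : 𝒳 → 𝒳' → ℝ) (Δ : ℝ) (ys : 𝒳 → 𝒳') (hys : ∀ a, d a (ys a) ≤ Δ)
    (ρ : ℕ) (QX : 𝒳 → ℝ) (h0 : ∀ a, 0 ≤ QX a) (h1 : ∑ a, QX a = 1)
    (hac : ∀ a, P a = 0 → QX a = 0) (n : ℕ) (hn : 0 < n) :
    Real.exp (n * (ρ * Rfun QX Q d Δ - klDivR QX P)) ≤ guessMomentN P Q d Δ ρ n := by
  have hq := fun x : Fin n → 𝒳 => ball_pos Q hQ d Δ ys hys x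
  have hpX : ∀ x : Fin n → 𝒳, 0 ≤ ∏ i, QX (x i) := fun y => Finset.prod_nonneg fun i _ => (h0 _)
  have hpP : ∀ x : Fin n → 𝒳, 0 ≤ ∏ i, P (x i) := fun y => Finset.prod_nonneg fun i _ => (hP0 _)
  set z : (Fin n → 𝒳) → ℝ := fun x => ρ * -Real.log (ballProbN Q d Δ x)
    - ∑ i, Real.log (QX (x i) / P (x i)) with hz
  have hmean : n * (ρ * Rfun QX Q d Δ - klDivR QX P) ≤ ∑ x, (∏ i, QX (x i)) • z x := by
    have e1 := ball_avg Q hQ hQ1 d Δ ys hys QX h0 h1 n hn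
    have e2 := sum_prod_sum (n := n) (fun _ => QX) (fun _ => h1)
      (fun _ a => Real.log (QX a / P a))
    have e3 : klDivR QX P = ∑ a, QX a * Real.log (QX a / P a) := by
      unfold klDivR
      refine Finset.sum_congr rfl fun a _ => ?_
      split_ifs with h
      · rw [h, zero_mul]
      · rfl
    rw [← e3] at e2
    simp only [Finset.sum_const, Finset.card_univ, Fintype.card_fin, nsmul_eq_mul] at e2
    simp only [hz, smul_eq_mul, mul_sub]
    rw [Finset.sum_sub_distrib, e2]
    have : ∑ x : Fin n → 𝒳, (∏ i, QX (x i)) * (ρ * -Real.log (ballProbN Q d Δ x))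
        = ρ * ∑ x : Fin n → 𝒳, (∏ i, QX (x i)) * -Real.log (ballProbN Q d Δ x) := by
      rw [Finset.mul_sum]
      exact Finset.sum_congr rfl fun x _ => by ring
    rw [this]
    have := mul_le_mul_of_nonneg_left e1 (Nat.cast_nonneg (α := ℝ) ρ)
    linarith
  refine (Real.exp_le_exp.2 hmean).trans ?_
  refine (convexOn_exp.map_sum_le (fun x _ => hpX x)
    (sum_prod_one (fun _ => QX) (fun _ => h1)) (fun _ _ => Set.mem_univ _)).trans ?_
  unfold guessMomentN
  refine Finset.sum_le_sum fun x _ => ?_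
  refine le_trans ?_ (mul_le_mul_of_nonneg_left
    (geom_moment _ (hq x) (ball_le_one Q hQ hQ1 d Δ x) ρ).1 (hpP x))
  rw [smul_eq_mul]
  rcases (hpX x).eq_or_lt with h | h
  · rw [← h, zero_mul]
    have := hq x
    have := hpP x
    positivity
  · have hXi : ∀ i, 0 < QX (x i) := fun i => lt_of_le_of_ne (h0 _)
      (Ne.symm ((Finset.prod_ne_zero_iff.1 h.ne') i (Finset.mem_univ i)))
    have hPi : ∀ i, 0 < P (x i) := fun i => lt_of_le_of_ne (hP0 _)
      (fun h' => (hXi i).ne' (hac _ h'.symm))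
    apply le_of_eq
    simp only [hz]
    rw [Real.exp_sub, Real.exp_sum, ← Real.log_inv, Real.exp_nat_mul,
      Real.exp_log (inv_pos.2 (hq x)),
      Finset.prod_congr rfl fun i _ => Real.exp_log (div_pos (hXi i) (hPi i)),
      Finset.prod_div_distrib]
    have : (∏ i, P (x i)) ≠ 0 := (Finset.prod_pos fun i _ => hPi i).ne'
    field_simp

lemma set_bdd {𝒳 𝒳' : Type*} [Fintype 𝒳] [Fintype 𝒳'] (P : 𝒳 → ℝ) (hP0 : ∀ x, 0 ≤ P x)
    (hP1 : ∑ x, P x = 1) (Q : 𝒳' → ℝ) (hQ : ∀ b, 0 < Q b)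
    (hQ1 : ∑ b, Q b = 1) (d : 𝒳 → 𝒳' → ℝ) (Δ : ℝ) (ys : 𝒳 → 𝒳') (hys : ∀ a, d a (ys a) ≤ Δ)
    (ρ : ℕ) :
    BddAbove {r : ℝ | ∃ QX : 𝒳 → ℝ, (∀ a, 0 ≤ QX a) ∧ (∑ a, QX a = 1) ∧
        (∀ a, P a = 0 → QX a = 0) ∧
        r = (ρ : ℝ) * Rfun QX Q d Δ - klDivR QX P} := by
  refine ⟨ρ * ∑ b, -Real.log (Q b), ?_⟩
  rintro r ⟨QX, h0, h1, hac, rfl⟩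
  have e1 := mul_le_mul_of_nonneg_left (R_upper QX h0 h1 Q hQ hQ1 d Δ ys hys)
    (Nat.cast_nonneg (α := ℝ) ρ)
  have e2 := kl_nonneg QX P h0 hP0 h1 hP1 hac
  linarith

/-- upper bound on the moment -/
lemma moment_upper {𝒳 𝒳' : Type*} [Fintype 𝒳] [Fintype 𝒳'] (P : 𝒳 → ℝ) (hP0 : ∀ x, 0 ≤ P x)
    (hP1 : ∑ x, P x = 1) (Q : 𝒳' → ℝ) (hQ : ∀ b, 0 < Q b)
    (hQ1 : ∑ b, Q b = 1) (d : 𝒳 → 𝒳' → ℝ) (Δ : ℝ) (ys : 𝒳 → 𝒳') (hys : ∀ a, d a (ys a) ≤ Δ)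
    (hmin : ∀ a b, d a (ys a) ≤ d a b) (ρ : ℕ) (S : ℝ)
    (hS : S = sSup {r : ℝ | ∃ QX : 𝒳 → ℝ, (∀ a, 0 ≤ QX a) ∧ (∑ a, QX a = 1) ∧
        (∀ a, P a = 0 → QX a = 0) ∧
        r = (ρ : ℝ) * Rfun QX Q d Δ - klDivR QX P}) (ε : ℝ) (hε : 0 < ε) :
    ∃ c : ℝ, 0 < c ∧ ∃ N : ℕ, ∀ n : ℕ, N ≤ n → guessMomentN P Q d Δ ρ n ≤
      c * ((n : ℝ) + 1) ^ Fintype.card 𝒳 * Real.exp (n * (S + ρ * (2 * ε))) := by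
  classical
  obtain ⟨c, hc, N, hN⟩ := ball_lower Q hQ hQ1 d Δ ys hys hmin ε hε
  refine ⟨ρ.factorial * (c⁻¹) ^ ρ, by positivity, max N 1, fun n hn => ?_⟩
  have hnN : N ≤ n := (le_max_left _ _).trans hn
  have hn0 : 0 < n := (le_max_right N 1).trans hn
  have hn' : (0:ℝ) < n := by exact_mod_cast hn0
  have hpP : ∀ x : Fin n → 𝒳, 0 ≤ ∏ i, P (x i) := fun y => Finset.prod_nonneg fun i _ => (hP0 _)
  have hterm : ∀ x : Fin n → 𝒳, (∏ i, P (x i)) *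
    ∑' k : ℕ, ((k : ℝ) + 1) ^ ρ *
      ((1 - ballProbN Q d Δ x) ^ k * ballProbN Q d Δ x) ≤
      (ρ.factorial * (c⁻¹) ^ ρ * Real.exp (n * (S + ρ * (2 * ε)))) * ∏ i, emp x (x i) := by
    intro x
    have hemp0 : 0 ≤ ∏ i, emp x (x i) := Finset.prod_nonneg fun i _ => emp_nonneg x _
    by_cases hx : ∏ i, P (x i) = 0
    · rw [hx, zero_mul]; positivity
    have hq := ball_pos Q hQ d Δ ys hys x
    set q := ballProbN Q d Δ x with hqdef
    set T := emp x with hT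
    have hT0 := emp_nonneg x
    have hT1 := emp_one x hn0
    have hac := emp_ac x P hx
    obtain ⟨V, hV, hVd, hVR⟩ := R_approx T hT0 hT1 Q hQ d Δ ys hys ε hε
    simp_rw [mul_assoc, ← Finset.mul_sum] at hVd hVR
    rw [hT, emp_sum x (fun a => ∑ b, V a b * d a b), div_le_iff₀ hn', mul_comm] at hVd
    rw [hT, emp_sum x (fun a => ∑ b, V a b * (Real.log (V a b) - Real.log (Q b))),
      div_lt_iff₀ hn', mul_comm _ (n:ℝ)] at hVR
    have hb := hN n hnN x V hV hVd
    have hb2 : c * Real.exp (-(n * (Rfun T Q d Δ + 2 * ε))) ≤ q := by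
      refine le_trans (mul_le_mul_of_nonneg_left (Real.exp_le_exp.2 ?_) hc.le) hb
      linarith
    have hqi : q⁻¹ ^ ρ ≤ (c⁻¹) ^ ρ * Real.exp (n * (ρ * Rfun T Q d Δ + ρ * (2 * ε))) := by
      have := inv_anti₀ (by positivity) hb2
      rw [mul_inv, ← Real.exp_neg, neg_neg] at this
      refine (pow_le_pow_left₀ (inv_pos.2 hq).le this ρ).trans (le_of_eq ?_)
      rw [mul_pow, ← Real.exp_nat_mul]
      congr 2
      ring
    have hSle : ρ * Rfun T Q d Δ - klDivR T P ≤ S := by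
      rw [hS]
      exact le_csSup (set_bdd P hP0 hP1 Q hQ hQ1 d Δ ys hys ρ) ⟨T, hT0, hT1, hac, rfl⟩
    have hPx := emp_prob x P hP0 hx hn0
    rw [← hT] at hPx
    calc _ ≤ (∏ i, P (x i)) * (ρ.factorial * q⁻¹ ^ ρ) := mul_le_mul_of_nonneg_left
          (geom_moment q hq (ball_le_one Q hQ hQ1 d Δ x) ρ).2 (hpP x)
      _ ≤ (∏ i, P (x i)) * (ρ.factorial * ((c⁻¹) ^ ρ *
          Real.exp (n * (ρ * Rfun T Q d Δ + ρ * (2 * ε))))) := by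
        have := hpP x
        gcongr
      _ = ρ.factorial * (c⁻¹) ^ ρ * (Real.exp (n * (ρ * Rfun T Q d Δ + ρ * (2 * ε)) +
          -(n * klDivR T P))) * ∏ i, T (x i) := by
        rw [hPx, Real.exp_add]; ring
      _ ≤ _ := by
        refine mul_le_mul_of_nonneg_right (mul_le_mul_of_nonneg_left (Real.exp_le_exp.2 ?_)
          (by positivity)) hemp0
        have := mul_le_mul_of_nonneg_left hSle hn'.le
        linarith
  unfold guessMomentN
  refine (Finset.sum_le_sum fun x _ => hterm x).trans ?_
  rw [← Finset.mul_sum]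
  refine (mul_le_mul_of_nonneg_left (emp_count n hn0) (by positivity)).trans (le_of_eq ?_)
  ring

end IidGuess

/-- Asymptotic performance of i.i.d. asynchronous guessing strategies:
`lim_n (1/n) log E[G_ρ(X^n|Q^{⊗n})] = max_{Q_X} [ρ R(Q_X,Q_{X̂}|Δ) − D(Q_X‖P_X)]`. -/
theorem iid_guessing_exponent {𝒳 𝒳' : Type*} [Fintype 𝒳] [Fintype 𝒳']
    (P : 𝒳 → ℝ) (hP0 : ∀ x, 0 ≤ P x) (hP1 : ∑ x, P x = 1)
    (Q : 𝒳' → ℝ) (hQpos : ∀ y, 0 < Q y) (hQ1 : ∑ y, Q y = 1)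
    (d : 𝒳 → 𝒳' → ℝ) (hd : ∀ x y, 0 ≤ d x y) (Δ : ℝ) (hΔ : 0 ≤ Δ)
    (hne : ∀ x, ∃ y, d x y ≤ Δ) (ρ : ℕ) (hρ : 0 < ρ) :
    Filter.Tendsto
      (fun n : ℕ => (1 / (n : ℝ)) * Real.log (guessMomentN P Q d Δ ρ n))
      Filter.atTop
      (nhds (sSup {r : ℝ | ∃ QX : 𝒳 → ℝ, (∀ a, 0 ≤ QX a) ∧ (∑ a, QX a = 1) ∧
        (∀ a, P a = 0 → QX a = 0) ∧
        r = (ρ : ℝ) * Rfun QX Q d Δ - klDivR QX P})) := by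
  classical
  have : Nonempty 𝒳' := by
    by_contra h
    rw [not_nonempty_iff] at h
    simp at hQ1
  obtain ⟨ys, hmin⟩ : ∃ ys : 𝒳 → 𝒳', ∀ a b, d a (ys a) ≤ d a b := by
    choose f hf using fun a => Finite.exists_min (d a)
    exact ⟨f, hf⟩
  have hys : ∀ a, d a (ys a) ≤ Δ := fun a => by
    obtain ⟨y, hy⟩ := hne a
    exact (hmin a y).trans hy
  have hbdd := IidGuess.set_bdd P hP0 hP1 Q hQpos hQ1 d Δ ys hys ρ
  generalize hS : sSup {r : ℝ | ∃ QX : 𝒳 → ℝ, (∀ a, 0 ≤ QX a) ∧ (∑ a, QX a = 1) ∧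
        (∀ a, P a = 0 → QX a = 0) ∧
        r = (ρ : ℝ) * Rfun QX Q d Δ - klDivR QX P} = S
  have hlow : ∀ n : ℕ, 0 < n → Real.exp (n * S) ≤ guessMomentN P Q d Δ ρ n := by
    intro n hn
    have hn' : (0:ℝ) < n := by exact_mod_cast hn
    have hpos : 0 < guessMomentN P Q d Δ ρ n := (Real.exp_pos _).trans_le
      (IidGuess.moment_lower P hP0 Q hQpos hQ1 d Δ ys hys ρ P hP0 hP1 (fun _ h => h) n hn)
    rw [← Real.le_log_iff_exp_le hpos, mul_comm, ← le_div_iff₀ hn', ← hS]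
    refine csSup_le ⟨_, P, hP0, hP1, fun _ h => h, rfl⟩ ?_
    rintro r ⟨QX, h0, h1, hac, rfl⟩
    rw [le_div_iff₀ hn', mul_comm, Real.le_log_iff_exp_le hpos]
    exact IidGuess.moment_lower P hP0 Q hQpos hQ1 d Δ ys hys ρ QX h0 h1 hac n hn
  refine tendsto_order.2 ⟨fun a ha => ?_, fun a ha => ?_⟩
  · filter_upwards [Filter.eventually_gt_atTop 0] with n hn
    have hn' : (0:ℝ) < n := by exact_mod_cast hn
    refine ha.trans_le ?_
    rw [one_div, ← div_eq_inv_mul, le_div_iff₀ hn', mul_comm,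
      Real.le_log_iff_exp_le ((Real.exp_pos _).trans_le (hlow n hn))]
    exact hlow n hn
  · have hρ' : (0:ℝ) < ρ := by exact_mod_cast hρ
    obtain ⟨c, hc, N, hN⟩ := IidGuess.moment_upper P hP0 hP1 Q hQpos hQ1 d Δ ys hys hmin ρ S
      hS.symm ((a - S) / (4 * ρ)) (div_pos (by linarith) (by positivity))
    have hlim : Filter.Tendsto (fun n : ℕ => Real.log c / (n:ℝ) +
        (Fintype.card 𝒳 : ℝ) * (Real.log ((n:ℝ) + 1) / n)) Filter.atTop (nhds 0) := by
      have t1 : Filter.Tendsto (fun n : ℕ => Real.log c / (n:ℝ)) Filter.atTop (nhds 0) :=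
        tendsto_const_div_atTop_nhds_zero_nat _
      have t2 : Filter.Tendsto (fun n : ℕ => Real.log ((n:ℝ) + 1) / n) Filter.atTop (nhds 0) := by
        have u1 : Filter.Tendsto (fun n : ℕ => Real.log ((n:ℝ) + 1) / ((n:ℝ) + 1))
            Filter.atTop (nhds 0) :=
          Real.isLittleO_log_id_atTop.tendsto_div_nhds_zero.comp
            (Filter.tendsto_atTop_add_const_right _ _ tendsto_natCast_atTop_atTop)
        have u2 := u1.mul_const 2
        rw [zero_mul] at u2
        refine squeeze_zero' ?_ ?_ u2
        · filter_upwards with n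
          exact div_nonneg (Real.log_nonneg (by simp)) (by positivity)
        · filter_upwards [Filter.eventually_gt_atTop 0] with n hn
          have hn' : (1:ℝ) ≤ n := by exact_mod_cast hn
          have hl : 0 ≤ Real.log ((n:ℝ) + 1) := Real.log_nonneg (by simp)
          rw [div_mul_eq_mul_div, div_le_div_iff₀ (by linarith) (by linarith)]
          nlinarith
      simpa using t1.add (t2.const_mul (Fintype.card 𝒳 : ℝ))
    filter_upwards [Filter.eventually_gt_atTop 0, Filter.eventually_ge_atTop N,
      hlim.eventually (gt_mem_nhds (show 0 < (a - S) / 2 by linarith))] with n hn hnN hl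
    have hn' : (0:ℝ) < n := by exact_mod_cast hn
    have hpos : 0 < guessMomentN P Q d Δ ρ n := (Real.exp_pos _).trans_le (hlow n hn)
    have h1 := Real.log_le_log hpos (hN n hnN)
    have hn1 : (0:ℝ) < (n:ℝ) + 1 := by linarith
    rw [Real.log_mul (by positivity) (Real.exp_pos _).ne', Real.log_exp,
      Real.log_mul hc.ne' (by positivity), Real.log_pow] at h1
    rw [one_div, ← div_eq_inv_mul]
    refine (div_le_div_of_nonneg_right h1 hn'.le).trans_lt ?_
    have e : (Real.log c + (Fintype.card 𝒳 : ℝ) * Real.log ((n:ℝ) + 1) +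
        n * (S + ρ * (2 * ((a - S) / (4 * ρ))))) / n =
        (Real.log c / (n:ℝ) + (Fintype.card 𝒳 : ℝ) * (Real.log ((n:ℝ) + 1) / n)) +
          (S + (a - S) / 2) := by
      field_simp
      ring
    rw [e]
    linarith
end
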